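/- arXiv:0805.0582 — 3 statements merged into one kernel-verified Lean document; each statement's English description precedes it below -/
import Mathlib

section
/- (Proposition 3.7, absolute case K = k.) Assume conditions (i)–(iii) hold, f is convolution invertible with inverse f^{-1}, and f takes its values in k·1_A. Let Ā = A/k·1_A and for r ≥ 0 let M_r = E ⊗_k Ā^{⊗r}, where E = A #_f H. For h ∈ H and a_1, …, a_r ∈ A set (a_1 ⊗ ⋯ ⊗ a_r)^h = a_1^{h^{(1)}} ⊗ ⋯ ⊗ a_r^{h^{(r)}}. Then the formula h ▶ (x ⊗ ā_1 ⊗ ⋯ ⊗ ā_r) = γ(h^{(3)}) x γ^{-1}(h^{(1)}) ⊗ class of (a_1 ⊗ ⋯ ⊗ a_r)^{h^{(2)}} (for x ∈ E) gives a well-defined k-linear map H ⊗_k M_r → M_r which makes M_r a left H-module: 1 ▶ m = m and (l h) ▶ m = l ▶ (h ▶ m) for all h, l ∈ H, m ∈ M_r. -/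
open TensorProduct

noncomputable section CrossedProduct

variable (k A H : Type*) [CommRing k] [Ring A] [Algebra k A] [Ring H] [HopfAlgebra k H]

/-- A chosen "Sweedler representation" of the comultiplication of `H`:
`comul h = ∑_{i < n h} c₁ h i ⊗ c₂ h i` for every `h`. -/
def IsSweedlerRep (n : H → ℕ) (c₁ c₂ : H → ℕ → H) : Prop :=
  ∀ h : H, Coalgebra.comul (R := k) h = ∑ i ∈ Finset.range (n h), c₁ h i ⊗ₜ[k] c₂ h i

/-- `σ` is a weak action of `H` on `A`: `(ab)^h = a^{h⁽¹⁾} b^{h⁽²⁾}`, `1^h = ε(h)1`, `a^1 = a`. -/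
def IsWeakAction (n : H → ℕ) (c₁ c₂ : H → ℕ → H) (σ : H →ₗ[k] A →ₗ[k] A) : Prop :=
  (∀ (h : H) (a b : A),
      σ h (a * b) = ∑ i ∈ Finset.range (n h), σ (c₁ h i) a * σ (c₂ h i) b) ∧
  (∀ h : H, σ h (1 : A) = Coalgebra.counit (R := k) h • (1 : A)) ∧
  (∀ a : A, σ (1 : H) a = a)

/-- Condition (i): normality of the cocycle `f`. -/
def IsNormal (f : H →ₗ[k] H →ₗ[k] A) : Prop :=
  ∀ h : H, f h (1 : H) = Coalgebra.counit (R := k) h • (1 : A) ∧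
    f (1 : H) h = Coalgebra.counit (R := k) h • (1 : A)

/-- Condition (ii): the cocycle condition
`f(l⁽¹⁾,m⁽¹⁾)^{h⁽¹⁾} f(h⁽²⁾, l⁽²⁾m⁽²⁾) = f(h⁽¹⁾,l⁽¹⁾) f(h⁽²⁾l⁽²⁾, m)`. -/
def IsCocycle (n : H → ℕ) (c₁ c₂ : H → ℕ → H) (σ : H →ₗ[k] A →ₗ[k] A)
    (f : H →ₗ[k] H →ₗ[k] A) : Prop :=
  ∀ h l m : H,
    (∑ i ∈ Finset.range (n h), ∑ j ∈ Finset.range (n l), ∑ p ∈ Finset.range (n m),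
      σ (c₁ h i) (f (c₁ l j) (c₁ m p)) * f (c₂ h i) (c₂ l j * c₂ m p)) =
    ∑ i ∈ Finset.range (n h), ∑ j ∈ Finset.range (n l),
      f (c₁ h i) (c₁ l j) * f (c₂ h i * c₂ l j) m

/-- Condition (iii): the twisted module condition
`(a^{l⁽¹⁾})^{h⁽¹⁾} f(h⁽²⁾,l⁽²⁾) = f(h⁽¹⁾,l⁽¹⁾) a^{h⁽²⁾l⁽²⁾}`. -/
def IsTwistedModule (n : H → ℕ) (c₁ c₂ : H → ℕ → H) (σ : H →ₗ[k] A →ₗ[k] A)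
    (f : H →ₗ[k] H →ₗ[k] A) : Prop :=
  ∀ (h l : H) (a : A),
    (∑ i ∈ Finset.range (n h), ∑ j ∈ Finset.range (n l),
      σ (c₁ h i) (σ (c₁ l j) a) * f (c₂ h i) (c₂ l j)) =
    ∑ i ∈ Finset.range (n h), ∑ j ∈ Finset.range (n l),
      f (c₁ h i) (c₁ l j) * σ (c₂ h i * c₂ l j) a

/-- `finv` is the convolution inverse of `f`:
`f(h⁽¹⁾,l⁽¹⁾) f⁻¹(h⁽²⁾,l⁽²⁾) = f⁻¹(h⁽¹⁾,l⁽¹⁾) f(h⁽²⁾,l⁽²⁾) = ε(h)ε(l)1_A`. -/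
def IsConvInverse (n : H → ℕ) (c₁ c₂ : H → ℕ → H) (f finv : H →ₗ[k] H →ₗ[k] A) : Prop :=
  ∀ h l : H,
    (∑ i ∈ Finset.range (n h), ∑ j ∈ Finset.range (n l),
        f (c₁ h i) (c₁ l j) * finv (c₂ h i) (c₂ l j) =
      (Coalgebra.counit (R := k) h * Coalgebra.counit (R := k) l) • (1 : A)) ∧
    (∑ i ∈ Finset.range (n h), ∑ j ∈ Finset.range (n l),
        finv (c₁ h i) (c₁ l j) * f (c₂ h i) (c₂ l j) =
      (Coalgebra.counit (R := k) h * Coalgebra.counit (R := k) l) • (1 : A))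

/-- The multiplication of `A #_f H` as a bilinear map on `A ⊗[k] H`:
`(a # h)(b # l) = a b^{h⁽¹⁾} f(h⁽²⁾, l⁽¹⁾) # h⁽³⁾ l⁽²⁾`. -/
def crossedMul (σ : H →ₗ[k] A →ₗ[k] A) (f : H →ₗ[k] H →ₗ[k] A) :
    (A ⊗[k] H) →ₗ[k] (A ⊗[k] H) →ₗ[k] (A ⊗[k] H) :=
  TensorProduct.lift
    (((LinearMap.llcomp k (A ⊗[k] H) (A ⊗[k] H) (A ⊗[k] H)).comp
        (TensorProduct.curry
          ((LinearMap.rTensor H (LinearMap.mul' k A)) ∘ₗ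
            (TensorProduct.assoc k A A H).symm.toLinearMap))).compl₂
      (TensorProduct.curry
        ((LinearMap.rTensor H (LinearMap.mul' k A)) ∘ₗ
         (TensorProduct.map
            (TensorProduct.map (TensorProduct.lift σ) (TensorProduct.lift f))
            (LinearMap.mul' k H)) ∘ₗ
         (LinearMap.rTensor (H ⊗[k] H)
            (TensorProduct.tensorTensorTensorComm k H H A H).toLinearMap) ∘ₗ
         (TensorProduct.tensorTensorTensorComm k (H ⊗[k] H) H (A ⊗[k] H) H).toLinearMap ∘ₗ
         (TensorProduct.map
            ((LinearMap.rTensor H (Coalgebra.comul (R := k))) ∘ₗ (Coalgebra.comul (R := k)))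
            ((TensorProduct.assoc k A H H).symm.toLinearMap ∘ₗ
              (LinearMap.lTensor A (Coalgebra.comul (R := k))))))))

/-- The unit `1 # 1` of the crossed product. -/
def oneE : A ⊗[k] H := (1 : A) ⊗ₜ[k] (1 : H)

/-- The map `γ : H → A #_f H`, `γ(h) = 1 # h`. -/
def gam : H →ₗ[k] A ⊗[k] H := TensorProduct.mk k A H 1

/-- The map `h ↦ f⁻¹(S(h⁽²⁾), h⁽³⁾) # S(h⁽¹⁾)`, the convolution inverse of `γ`. -/
def gammaInv (finv : H →ₗ[k] H →ₗ[k] A) : H →ₗ[k] A ⊗[k] H :=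
  (TensorProduct.comm k H A).toLinearMap ∘ₗ
    (TensorProduct.map (HopfAlgebra.antipode (R := k))
      ((TensorProduct.lift finv) ∘ₗ (LinearMap.rTensor H (HopfAlgebra.antipode (R := k))))) ∘ₗ
    (LinearMap.lTensor H (Coalgebra.comul (R := k))) ∘ₗ (Coalgebra.comul (R := k))

/-- The canonical coaction `ν = id_A ⊗ Δ : A #_f H → (A #_f H) ⊗ H`. -/
def nuE : (A ⊗[k] H) →ₗ[k] (A ⊗[k] H) ⊗[k] H :=
  (TensorProduct.assoc k A H H).symm.toLinearMap ∘ₗ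
    (LinearMap.lTensor A (Coalgebra.comul (R := k)))

/-- Convolution product on `Hom_k(H, A #_f H)`: `(u * v)(h) = u(h⁽¹⁾) v(h⁽²⁾)`. -/
def convMul (σ : H →ₗ[k] A →ₗ[k] A) (f : H →ₗ[k] H →ₗ[k] A)
    (u v : H →ₗ[k] A ⊗[k] H) : H →ₗ[k] A ⊗[k] H :=
  (TensorProduct.lift (crossedMul k A H σ f)) ∘ₗ (TensorProduct.map u v) ∘ₗ
    (Coalgebra.comul (R := k))

/-- The unit of the convolution algebra `Hom_k(H, A #_f H)`: `h ↦ ε(h) 1_E`. -/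
def convOne : H →ₗ[k] A ⊗[k] H :=
  (LinearMap.toSpanSingleton k (A ⊗[k] H) (oneE k A H)) ∘ₗ (Coalgebra.counit (R := k))

/-- Sum over iterated (right-nested) Sweedler components:
`swSum n c₁ c₂ r h F = ∑ F (h⁽¹⁾, …, h⁽ʳ⁺¹⁾)`. -/
def swSum {M : Type*} [AddCommMonoid M] (n : H → ℕ) (c₁ c₂ : H → ℕ → H) :
    (r : ℕ) → H → ((Fin (r + 1) → H) → M) → M
  | 0, h, F => F (fun _ => h)
  | (r + 1), h, F =>
      ∑ i ∈ Finset.range (n h), swSum n c₁ c₂ r (c₂ h i) (fun g => F (Fin.cons (c₁ h i) g))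

/-- The product of a list of elements of the crossed product. -/
def prodE (σ : H →ₗ[k] A →ₗ[k] A) (f : H →ₗ[k] H →ₗ[k] A) :
    List (A ⊗[k] H) → A ⊗[k] H
  | [] => oneE k A H
  | x :: L => crossedMul k A H σ f x (prodE σ f L)

end CrossedProduct



namespace CPM
open TensorProduct Coalgebra WithConv

section Tools
variable {k : Type*} [CommRing k]

/-- convolution algebra -/
abbrev W (k C B : Type*) [CommRing k] [AddCommGroup C] [Module k C] [Coalgebra k C]
    [Ring B] [Algebra k B] := WithConv (C →ₗ[k] B)

variable {C D F B B' : Type*} [AddCommGroup C] [Module k C] [Coalgebra k C]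
  [AddCommGroup D] [Module k D] [Coalgebra k D]
  [AddCommGroup F] [Module k F] [Coalgebra k F]
  [Ring B] [Algebra k B] [Ring B'] [Algebra k B']

/-- postcomposition with an algebra hom -/
def post (φ : B →ₐ[k] B') : W k C B →+* W k C B' where
  toFun u := toConv (φ.toLinearMap ∘ₗ u.ofConv)
  map_one' := by ext c; simp [LinearMap.convOne_def]
  map_zero' := by ext c; simp
  map_add' u v := by ext c; simp
  map_mul' u v := by ext c; simp [(ℛ k c).convMul_apply]

@[simp] lemma post_apply (φ : B →ₐ[k] B') (u : W k C B) (c : C) : post φ u c = φ (u c) := rfl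

/-- precomposition with a coalgebra hom -/
def pre (g : D →ₗc[k] C) : W k C B →+* W k D B where
  toFun u := toConv (u.ofConv ∘ₗ g.toLinearMap)
  map_one' := by ext c; simp [LinearMap.convOne_def]
  map_zero' := by ext c; simp
  map_add' u v := by ext c; simp
  map_mul' u v := by
    apply WithConv.ext
    exact LinearMap.convMul_comp_coalgHom_distrib u v g

@[simp] lemma pre_apply (g : D →ₗc[k] C) (u : W k C B) (d : D) : pre g u d = u (g d) := rfl

lemma pre_pre (g : D →ₗc[k] C) (g' : F →ₗc[k] D) (u : W k C B) :
    pre g' (pre g u) = pre (g.comp g') u := rfl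

lemma pre_post (g : D →ₗc[k] C) (φ : B →ₐ[k] B') (u : W k C B) :
    pre g (post φ u) = post φ (pre g u) := rfl

variable (k C D) in
noncomputable def p1 : C ⊗[k] D →ₗc[k] C :=
  (Coalgebra.TensorProduct.rid k k C).toCoalgHom.comp
    (Coalgebra.TensorProduct.map (CoalgHom.id k C) (counitCoalgHom k D))

variable (k C D) in
noncomputable def p2 : C ⊗[k] D →ₗc[k] D :=
  (Coalgebra.TensorProduct.lid k D).toCoalgHom.comp
    (Coalgebra.TensorProduct.map (counitCoalgHom k C) (CoalgHom.id k D))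

@[simp] lemma p1_tmul (c : C) (d : D) : p1 k C D (c ⊗ₜ d) = counit (R := k) d • c := rfl
@[simp] lemma p2_tmul (c : C) (d : D) : p2 k C D (c ⊗ₜ d) = counit (R := k) c • d := rfl

lemma W_ext {u v : W k (C ⊗[k] D) B} (h : ∀ c d, u (c ⊗ₜ d) = v (c ⊗ₜ d)) : u = v := by
  apply WithConv.ext; apply TensorProduct.ext'; exact h

lemma W_ext3 {u v : W k ((C ⊗[k] D) ⊗[k] F) B}
    (h : ∀ c d e, u ((c ⊗ₜ d) ⊗ₜ e) = v ((c ⊗ₜ d) ⊗ₜ e)) : u = v := by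
  apply WithConv.ext; apply TensorProduct.ext_threefold; exact h

lemma sum_smul_counit {ι : Type*} {c : C} (r : Coalgebra.Repr k c ι) :
    ∑ i ∈ r.index, counit (R := k) (r.right i) • r.left i = c := by
  have := congrArg (TensorProduct.rid k C) (Coalgebra.sum_tmul_counit_eq r)
  rw [map_sum] at this
  simpa only [TensorProduct.rid_tmul, one_smul] using this

lemma conv_tmul {ι κ : Type*} (u v : W k (C ⊗[k] D) B) (c : C) (d : D) (r : Coalgebra.Repr k c ι)
    (s : Coalgebra.Repr k d κ) :
    (u * v) (c ⊗ₜ d) = ∑ i ∈ r.index, ∑ j ∈ s.index,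
      u (r.left i ⊗ₜ s.left j) * v (r.right i ⊗ₜ s.right j) := by
  rw [LinearMap.convMul_apply, TensorProduct.comul_tmul, ← r.eq, ← s.eq]
  simp only [TensorProduct.sum_tmul, map_sum]
  simp [TensorProduct.tmul_sum]

lemma p1_mul {ι : Type*} (u : W k C B) (v : W k (C ⊗[k] D) B) (c : C) (d : D)
    (r : Coalgebra.Repr k c ι) :
    (pre (p1 k C D) u * v) (c ⊗ₜ d) = ∑ i ∈ r.index, u (r.left i) * v (r.right i ⊗ₜ d) := by
  rw [conv_tmul _ _ _ _ r (ℛ k d)]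
  refine Finset.sum_congr rfl fun i _ => ?_
  conv_rhs => rw [← sum_counit_smul (ℛ k d)]
  simp [TensorProduct.tmul_sum, Finset.mul_sum]

lemma p1_mul_p2 (u : W k C B) (v : W k D B) (c : C) (d : D) :
    (pre (p1 k C D) u * pre (p2 k C D) v) (c ⊗ₜ d) = u c * v d := by
  rw [p1_mul _ _ _ _ (ℛ k c)]
  conv_rhs => rw [← sum_smul_counit (ℛ k c)]
  simp [Finset.sum_mul]

lemma p2_mul_p1 (u : W k C B) (v : W k D B) (c : C) (d : D) :
    (pre (p2 k C D) v * pre (p1 k C D) u) (c ⊗ₜ d) = v d * u c := by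
  rw [conv_tmul _ _ _ _ (ℛ k c) (ℛ k d)]
  conv_rhs => rw [← sum_counit_smul (ℛ k c), ← sum_smul_counit (ℛ k d)]
  simp only [pre_apply, p1_tmul, p2_tmul, map_smul, mul_smul_comm, smul_mul_assoc, map_sum,
    Finset.mul_sum, Finset.sum_mul, Finset.smul_sum]
  exact Finset.sum_congr rfl fun i _ => Finset.sum_congr rfl fun j _ => smul_comm _ _ _

/-- values commute implies the pulled-back maps commute -/
lemma p1_p2_comm (u : W k C B) (v : W k D B) (h : ∀ c d, u c * v d = v d * u c) :
    pre (p1 k C D) u * pre (p2 k C D) v = pre (p2 k C D) v * pre (p1 k C D) u := by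
  apply W_ext; intro c d
  rw [p1_mul_p2, p2_mul_p1, h]

variable (k C) in
/-- constant map `c ↦ ε(c) b` -/
def cst (b : B) : W k C B := toConv (LinearMap.toSpanSingleton k B b ∘ₗ counit)

@[simp] lemma cst_apply (b : B) (c : C) : cst k C b c = counit (R := k) c • b := rfl

lemma cst_mul (b : B) (u : W k C B) (c : C) : (cst k C b * u) c = b * u c := by
  rw [(ℛ k c).convMul_apply]
  conv_rhs => rw [← sum_counit_smul (ℛ k c)]
  simp [Finset.mul_sum]

lemma mul_cst (b : B) (u : W k C B) (c : C) : (u * cst k C b) c = u c * b := by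
  rw [(ℛ k c).convMul_apply]
  conv_rhs => rw [← sum_smul_counit (ℛ k c)]
  simp [Finset.sum_mul]

/-- centrality of the convolution inverse -/
lemma inv_comm {u v : W k C B} (h1 : u * v = 1) (h2 : v * u = 1) (b : B)
    (hu : ∀ c, b * u c = u c * b) (c : C) : b * v c = v c * b := by
  have e : cst k C b * u = u * cst k C b := by
    apply WithConv.ext; ext c
    rw [cst_mul, mul_cst, hu]
  have e2 : cst k C b * v = v * cst k C b := by
    calc cst k C b * v = (v * u) * cst k C b * v := by rw [h2, one_mul]
      _ = v * (u * cst k C b) * v := by noncomm_ring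
      _ = v * cst k C b * (u * v) := by rw [← e]; noncomm_ring
      _ = _ := by rw [h1, mul_one]
  rw [← cst_mul, ← mul_cst, e2]

end Tools
end CPM


namespace CPM
open TensorProduct Coalgebra WithConv

noncomputable section Cross
variable {k A H : Type*} [CommRing k] [Ring A] [Algebra k A] [Ring H] [HopfAlgebra k H]
variable (σ : H →ₗ[k] A →ₗ[k] A) (f : H →ₗ[k] H →ₗ[k] A)

variable {C D : Type*} [AddCommGroup C] [Module k C] [Coalgebra k C]
  [AddCommGroup D] [Module k D] [Coalgebra k D]

variable (k A H) in
abbrev iL : A →ₐ[k] A ⊗[k] H := Algebra.TensorProduct.includeLeft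
variable (k A H) in
abbrev iR : H →ₐ[k] A ⊗[k] H := Algebra.TensorProduct.includeRight

/-- `h ↦ a^h` -/
def sg (a : A) : W k H A := toConv (σ.flip a)
@[simp] lemma sg_apply (a : A) (h : H) : sg σ a h = σ h a := rfl

/-- `f` as a convolution element -/
def fW : W k (H ⊗[k] H) A := toConv (TensorProduct.lift f)
@[simp] lemma fW_apply (a b : H) : fW f (a ⊗ₜ b) = f a b := rfl

def coW (φ : C →ₗc[k] H) : W k C H := toConv φ.toLinearMap
@[simp] lemma coW_apply (φ : C →ₗc[k] H) (c : C) : coW φ c = φ c := rfl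

variable (k H) in
abbrev mu : H ⊗[k] H →ₗc[k] H := Bialgebra.mulCoalgHom k H

def Z0 : W k (H ⊗[k] H) (A ⊗[k] H) := post (iL k A H) (fW f) * post (iR k A H) (coW (mu k H))

lemma S1 (a b : A) (h l : H) :
    crossedMul k A H σ f (a ⊗ₜ h) (b ⊗ₜ l) =
      iL k A H a * (pre (p1 k H H) (post (iL k A H) (sg σ b)) * Z0 f) (h ⊗ₜ l) := by
  rw [Z0, ← mul_assoc, conv_tmul _ _ _ _ (ℛ k h) (ℛ k l)]
  simp_rw [p1_mul _ _ _ _ (ℛ k _)]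
  simp only [crossedMul, lift.tmul, LinearMap.compl₂_apply, LinearMap.coe_comp, Function.comp_apply,
    LinearMap.llcomp_apply, curry_apply, LinearEquiv.coe_coe, map_tmul, LinearMap.lTensor_tmul]
  rw [← (ℛ k h).eq, ← (ℛ k l).eq]
  simp only [map_sum, tmul_sum, sum_tmul, LinearMap.rTensor_tmul, assoc_symm_tmul]
  rw [Finset.sum_comm, Finset.mul_sum]
  refine Finset.sum_congr rfl fun i _ => ?_
  rw [Finset.mul_sum]
  refine Finset.sum_congr rfl fun j _ => ?_
  conv_lhs => rw [← (ℛ k ((ℛ k h).left i)).eq]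
  simp only [map_sum, tmul_sum, sum_tmul, Finset.mul_sum, Finset.sum_mul]
  refine Finset.sum_congr rfl fun p _ => ?_
  simp

abbrev tm {C' D' : Type*} [AddCommGroup C'] [Module k C'] [Coalgebra k C']
  [AddCommGroup D'] [Module k D'] [Coalgebra k D'] (φ : C →ₗc[k] C') (ψ : D →ₗc[k] D') :
    C ⊗[k] D →ₗc[k] C' ⊗[k] D' :=
  Coalgebra.TensorProduct.map φ ψ

lemma pre_tm_p1 {C' D' B : Type*} [AddCommGroup C'] [Module k C'] [Coalgebra k C']
    [AddCommGroup D'] [Module k D'] [Coalgebra k D'] [Ring B] [Algebra k B]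
    (φ : C →ₗc[k] C') (ψ : D →ₗc[k] D') (u : W k C' B) :
    pre (tm φ ψ) (pre (p1 k C' D') u) = pre (p1 k C D) (pre φ u) := by
  apply W_ext; intro c d
  simp

def elt (u : W k C A) (φ : C →ₗc[k] H) : W k C (A ⊗[k] H) :=
  post (iL k A H) u * post (iR k A H) (coW φ)

lemma elt_apply {ι : Type*} (u : W k C A) (φ : C →ₗc[k] H) (c : C) (r : Coalgebra.Repr k c ι) :
    elt u φ c = ∑ i ∈ r.index, u (r.left i) ⊗ₜ φ (r.right i) := by
  rw [elt, r.convMul_apply]; simp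

def sig (φ : C →ₗc[k] H) (v : W k D A) : W k (C ⊗[k] D) A :=
  toConv (TensorProduct.lift σ ∘ₗ TensorProduct.map φ.toLinearMap v.ofConv)
@[simp] lemma sig_apply (φ : C →ₗc[k] H) (v : W k D A) (c : C) (d : D) :
    sig σ φ v (c ⊗ₜ d) = σ (φ c) (v d) := rfl

lemma S2 (u : W k C A) (v : W k D A) (φ : C →ₗc[k] H) (ψ : D →ₗc[k] H) (c : C) (d : D) :
    crossedMul k A H σ f (elt u φ c) (elt v ψ d) =
      (elt (pre (p1 k C D) u * sig σ φ v * pre (tm φ ψ) (fW f)) ((mu k H).comp (tm φ ψ)))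
        (c ⊗ₜ d) := by
  have key : elt (pre (p1 k C D) u * sig σ φ v * pre (tm φ ψ) (fW f)) ((mu k H).comp (tm φ ψ))
      = pre (p1 k C D) (post (iL k A H) u) *
        (post (iL k A H) (sig σ φ v) * pre (tm φ ψ) (Z0 f)) := by
    rw [elt, map_mul, map_mul, Z0, map_mul, mul_assoc, mul_assoc]
    rfl
  rw [key, p1_mul _ _ _ _ (ℛ k c), elt_apply _ _ _ (ℛ k c), elt_apply _ _ _ (ℛ k d)]
  simp only [map_sum, LinearMap.sum_apply, S1]
  rw [Finset.sum_comm]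
  refine Finset.sum_congr rfl fun i _ => ?_
  rw [conv_tmul _ _ _ _ (ℛ k _) (ℛ k d), Finset.sum_comm, Finset.mul_sum]
  refine Finset.sum_congr rfl fun j _ => ?_
  have e : ∀ X : W k (H ⊗[k] H) (A ⊗[k] H), ∀ a b, X (φ a ⊗ₜ ψ b) = pre (tm φ ψ) X (a ⊗ₜ b) :=
    fun _ _ _ => rfl
  rw [e, map_mul, pre_tm_p1, p1_mul _ _ _ _ (ℛ k _)]
  simp

end Cross
end CPM

namespace CPM
open TensorProduct Coalgebra WithConv

noncomputable section Bridge
variable {k A H : Type*} [CommRing k] [Ring A] [Algebra k A] [Ring H] [HopfAlgebra k H]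

/-- product representation -/
def reprTmul {C D : Type*} [AddCommGroup C] [Module k C] [Coalgebra k C]
    [AddCommGroup D] [Module k D] [Coalgebra k D] {ι κ : Type*} {c : C} {d : D}
    (r : Coalgebra.Repr k c ι) (s : Coalgebra.Repr k d κ) :
    Coalgebra.Repr k (c ⊗ₜ[k] d) (ι × κ) where
  index := r.index ×ˢ s.index
  left x := r.left x.1 ⊗ₜ s.left x.2
  right x := r.right x.1 ⊗ₜ s.right x.2
  eq := by
    rw [TensorProduct.comul_tmul, ← r.eq, ← s.eq, Finset.sum_product]
    simp only [TensorProduct.sum_tmul, map_sum]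
    simp [TensorProduct.tmul_sum]

/-- the coassociativity coalgebra map -/
abbrev qq (k H : Type*) [CommRing k] [Ring H] [HopfAlgebra k H] :
    (H ⊗[k] H) ⊗[k] H →ₗc[k] H ⊗[k] (H ⊗[k] H) :=
  (Coalgebra.TensorProduct.assoc k k H H H).toCoalgHom

/-- convolution form of the hypotheses -/
structure Good (σ : H →ₗ[k] A →ₗ[k] A) (f finv : H →ₗ[k] H →ₗ[k] A) : Prop where
  weak : ∀ b c, sg σ (b * c) = sg σ b * sg σ c
  sone : ∀ h : H, σ h (1 : A) = Coalgebra.counit (R := k) h • (1 : A)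
  onea : ∀ a : A, σ (1 : H) a = a
  n1 : ∀ h : H, f h (1 : H) = Coalgebra.counit (R := k) h • (1 : A)
  n2 : ∀ h : H, f (1 : H) h = Coalgebra.counit (R := k) h • (1 : A)
  twist : ∀ c, sig σ (CoalgHom.id k H) (sg σ c) * fW f = fW f * pre (mu k H) (sg σ c)
  inv1 : fW f * fW finv = 1
  inv2 : fW finv * fW f = 1
  coc : pre (qq k H) (sig σ (CoalgHom.id k H) (fW f)) *
      pre (qq k H) (pre (tm (CoalgHom.id k H) (mu k H)) (fW f)) =
    pre (p1 k (H ⊗[k] H) H) (fW f) * pre (tm (mu k H) (CoalgHom.id k H)) (fW f)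
  fk : ∀ h l : H, ∃ c : k, f h l = c • (1 : A)

/-- Sweedler representation -/
def rp {n : H → ℕ} {c₁ c₂ : H → ℕ → H} (hrep : IsSweedlerRep k H n c₁ c₂) (h : H) :
    Coalgebra.Repr k h ℕ where
  index := Finset.range (n h)
  left := c₁ h
  right := c₂ h
  eq := (hrep h).symm

lemma good_of (σ : H →ₗ[k] A →ₗ[k] A) (f finv : H →ₗ[k] H →ₗ[k] A)
    (n : H → ℕ) (c₁ c₂ : H → ℕ → H)
    (hrep : IsSweedlerRep k H n c₁ c₂)
    (hweak : IsWeakAction k A H n c₁ c₂ σ)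
    (hnormal : IsNormal k A H f)
    (hcocycle : IsCocycle k A H n c₁ c₂ σ f)
    (htwisted : IsTwistedModule k A H n c₁ c₂ σ f)
    (hinv : IsConvInverse k A H n c₁ c₂ f finv)
    (hfk : ∀ h l : H, ∃ c : k, f h l = c • (1 : A)) : Good σ f finv where
  weak b c := by
    apply WithConv.ext; ext h
    refine Eq.trans ?_ ((rp hrep h).convMul_apply _ _).symm
    exact hweak.1 h b c
  sone := hweak.2.1
  onea := hweak.2.2
  n1 h := (hnormal h).1
  n2 h := (hnormal h).2
  twist c := by
    apply W_ext; intro h l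
    rw [conv_tmul _ _ _ _ (rp hrep h) (rp hrep l), conv_tmul _ _ _ _ (rp hrep h) (rp hrep l)]
    exact htwisted h l c
  inv1 := by
    apply W_ext; intro h l
    rw [conv_tmul _ _ _ _ (rp hrep h) (rp hrep l)]
    refine (hinv h l).1.trans ?_
    simp [LinearMap.convOne_def, Algebra.algebraMap_eq_smul_one, mul_smul, mul_comm]
  inv2 := by
    apply W_ext; intro h l
    rw [conv_tmul _ _ _ _ (rp hrep h) (rp hrep l)]
    refine (hinv h l).2.trans ?_
    simp [LinearMap.convOne_def, Algebra.algebraMap_eq_smul_one, mul_smul, mul_comm]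
  coc := by
    apply W_ext3; intro h l m
    rw [conv_tmul _ _ _ _ (reprTmul (rp hrep h) (rp hrep l)) (rp hrep m),
      p1_mul _ _ _ _ (reprTmul (rp hrep h) (rp hrep l))]
    refine Eq.trans ?_ ((hcocycle h l m).trans ?_)
    · refine (Finset.sum_product _ _ _).trans ?_
      rfl
    · refine Eq.trans ?_ (Finset.sum_product _ _ _).symm
      rfl
  fk := hfk

variable {σ : H →ₗ[k] A →ₗ[k] A} {f finv : H →ₗ[k] H →ₗ[k] A}

lemma sig_mul (G : Good σ f finv) {D : Type*} [AddCommGroup D] [Module k D] [Coalgebra k D] (v w : W k D A) :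
    sig σ (CoalgHom.id k H) (v * w) = sig σ (CoalgHom.id k H) v * sig σ (CoalgHom.id k H) w := by
  apply W_ext; intro h d
  rw [conv_tmul _ _ _ _ (ℛ k h) (ℛ k d), sig_apply, (ℛ k d).convMul_apply, Finset.sum_comm,
    map_sum]
  refine Finset.sum_congr rfl fun i _ => ?_
  have := congrArg (fun u : W k H A => u h) (G.weak (v ((ℛ k d).left i)) (w ((ℛ k d).right i)))
  rw [(ℛ k h).convMul_apply] at this
  exact this

lemma tm_id : tm (CoalgHom.id k H) (CoalgHom.id k H) = CoalgHom.id k (H ⊗[k] H) := by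
  apply CoalgHom.ext
  intro x
  exact congrArg (fun t : H ⊗[k] H →ₗ[k] H ⊗[k] H => t x) (TensorProduct.map_id (R := k))

lemma elt_cst (a : A) (h : H) : elt (cst k H a) (CoalgHom.id k H) h = a ⊗ₜ[k] h := by
  rw [elt_apply _ _ _ (ℛ k h)]
  simp only [cst_apply, CoalgHom.id_apply, ← TensorProduct.smul_tmul', ← TensorProduct.tmul_smul]
  rw [← TensorProduct.tmul_sum, sum_counit_smul]

lemma pre_qq_p1 {B : Type*} [Ring B] [Algebra k B] (u : W k H B) :
    pre (qq k H) (pre (p1 k H (H ⊗[k] H)) u) =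
      pre (p1 k (H ⊗[k] H) H) (pre (p1 k H H) u) := by
  apply W_ext3; intro h l m
  simp [mul_smul]

lemma mu_assoc : (mu k H).comp (tm (mu k H) (CoalgHom.id k H)) =
    ((mu k H).comp (tm (CoalgHom.id k H) (mu k H))).comp (qq k H) := by
  apply CoalgHom.ext
  intro x
  have : ((mu k H).comp (tm (mu k H) (CoalgHom.id k H))).toLinearMap =
    (((mu k H).comp (tm (CoalgHom.id k H) (mu k H))).comp (qq k H)).toLinearMap := by
    apply TensorProduct.ext_threefold
    intro h l m
    exact mul_assoc h l m
  exact congrArg (fun t : (H ⊗[k] H) ⊗[k] H →ₗ[k] H => t x) this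

lemma cm_assoc0 (G : Good σ f finv) (a b c : A) (h l m : H) :
    crossedMul k A H σ f (crossedMul k A H σ f (a ⊗ₜ h) (b ⊗ₜ l)) (c ⊗ₜ m) =
      crossedMul k A H σ f (a ⊗ₜ h) (crossedMul k A H σ f (b ⊗ₜ l) (c ⊗ₜ m)) := by
  rw [← elt_cst a h, ← elt_cst b l, ← elt_cst c m, S2, S2, S2, S2, tm_id]
  have e0 : (mu k H).comp (CoalgHom.id k (H ⊗[k] H)) = mu k H := rfl
  have e1 : ∀ u : W k (H ⊗[k] H) A, pre (CoalgHom.id k (H ⊗[k] H)) u = u := fun _ => rfl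
  have e2 : ∀ (u : W k (H ⊗[k] (H ⊗[k] H)) A) (φ : H ⊗[k] (H ⊗[k] H) →ₗc[k] H),
    elt u φ (h ⊗ₜ (l ⊗ₜ m)) = elt (pre (qq k H) u) (φ.comp (qq k H)) ((h ⊗ₜ l) ⊗ₜ m) := by
    intro u φ
    change pre (qq k H) (elt u φ) ((h ⊗ₜ l) ⊗ₜ m) = _
    rw [elt, elt, map_mul]
    rfl
  rw [e0, e1, e2, mu_assoc]
  congr 2
  have s1 : ∀ d : A, sig σ (CoalgHom.id k H) (cst k H d) = pre (p1 k H H) (sg σ d) := by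
    intro d; apply W_ext; intro h l; simp
  have s2 : sig σ (mu k H) (cst k H c) = pre (p1 k (H ⊗[k] H) H) (pre (mu k H) (sg σ c)) := by
    apply W_ext3; intro h l m; simp
  have s3 : sig σ (CoalgHom.id k H) (pre (p1 k H H) (cst k H b)) =
      pre (p1 k H (H ⊗[k] H)) (sg σ b) := by
    apply WithConv.ext; ext h l m; simp [mul_smul]
  have s4 : pre (qq k H) (sig σ (CoalgHom.id k H) (pre (p1 k H H) (sg σ c))) =
      pre (p1 k (H ⊗[k] H) H) (sig σ (CoalgHom.id k H) (sg σ c)) := by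
    apply W_ext3; intro h l m; simp
  rw [s1, s1, s2, sig_mul G, sig_mul G, s3]
  simp only [map_mul]
  rw [s4, pre_qq_p1, pre_qq_p1]
  simp only [mul_assoc]
  rw [G.coc, ← mul_assoc (pre (p1 k (H ⊗[k] H) H) (sig σ (CoalgHom.id k H) (sg σ c))),
    ← map_mul, G.twist, map_mul, mul_assoc]

lemma cm_assoc (G : Good σ f finv) (x y z : A ⊗[k] H) :
    crossedMul k A H σ f (crossedMul k A H σ f x y) z =
      crossedMul k A H σ f x (crossedMul k A H σ f y z) := by
  induction x with
  | zero => simp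
  | add x x' hx hx' => simp only [map_add, LinearMap.add_apply, hx, hx']
  | tmul a h =>
    induction y with
    | zero => simp
    | add x x' hx hx' => simp only [map_add, LinearMap.add_apply, hx, hx']
    | tmul b l =>
      induction z with
      | zero => simp
      | add x x' hx hx' => simp only [map_add, hx, hx']
      | tmul c m => exact cm_assoc0 G a b c h l m

lemma sg_one (G : Good σ f finv) : sg σ 1 = 1 := by
  apply WithConv.ext; ext h
  simp [G.sone, LinearMap.convOne_def, Algebra.algebraMap_eq_smul_one]

variable (k H) in
/-- representation of the comultiplication of one -/
def repOne : Coalgebra.Repr k (1 : H) Unit where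
  index := {()}
  left _ := 1
  right _ := 1
  eq := by simp [Bialgebra.comul_one, Algebra.TensorProduct.one_def]

lemma Z0_left (G : Good σ f finv) (l : H) : Z0 f (1 ⊗ₜ l) = iR k A H l := by
  rw [Z0, conv_tmul _ _ _ _ (repOne k H) (ℛ k l)]
  conv_rhs => rw [← sum_counit_smul (ℛ k l)]
  simp [repOne, G.n2]

lemma Z0_right (G : Good σ f finv) (l : H) : Z0 f (l ⊗ₜ 1) = iR k A H l := by
  rw [Z0, conv_tmul _ _ _ _ (ℛ k l) (repOne k H)]
  conv_rhs => rw [← sum_counit_smul (ℛ k l)]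
  simp [repOne, G.n1]

/-- simple multiplication by elements of `A` -/
lemma cm_left (G : Good σ f finv) (a : A) (x : A ⊗[k] H) :
    crossedMul k A H σ f (a ⊗ₜ 1) x = iL k A H a * x := by
  induction x with
  | zero => simp
  | add x x' hx hx' => simp only [map_add, mul_add, hx, hx']
  | tmul b l =>
    rw [S1, p1_mul _ _ _ _ (repOne k H)]
    simp [repOne, Z0_left G, G.onea]

lemma cm_right (G : Good σ f finv) (x : A ⊗[k] H) :
    crossedMul k A H σ f x (1 ⊗ₜ 1) = x := by
  induction x with
  | zero => simp
  | add x x' hx hx' => simp only [map_add, LinearMap.add_apply, hx, hx']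
  | tmul b l =>
    rw [S1, sg_one G, map_one, map_one, one_mul, Z0_right G]
    simp

lemma cm_gam (G : Good σ f finv) (h l : H) :
    crossedMul k A H σ f (1 ⊗ₜ h) (1 ⊗ₜ l) = Z0 f (h ⊗ₜ l) := by
  rw [S1, sg_one G, map_one, map_one, one_mul]
  simp

end Bridge
end CPM

namespace CPM
open TensorProduct Coalgebra WithConv

noncomputable section RingE
variable {k A H : Type*} [CommRing k] [Ring A] [Algebra k A] [Ring H] [HopfAlgebra k H]
variable {σ : H →ₗ[k] A →ₗ[k] A} {f finv : H →ₗ[k] H →ₗ[k] A}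

lemma cm_one_left (G : Good σ f finv) (x : A ⊗[k] H) :
    crossedMul k A H σ f (1 ⊗ₜ 1) x = x :=
  (cm_left G 1 x).trans (by rw [map_one, one_mul])

/-- the crossed product -/
def E (_ : Good σ f finv) : Type _ := A ⊗[k] H

variable (G : Good σ f finv)

instance : AddCommGroup (E G) := inferInstanceAs (AddCommGroup (A ⊗[k] H))
instance : Module k (E G) := inferInstanceAs (Module k (A ⊗[k] H))

instance : Ring (E G) :=
  { (inferInstance : AddCommGroup (E G)) with
    mul := fun x y => crossedMul k A H σ f x y
    one := (1 : A) ⊗ₜ[k] (1 : H)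
    left_distrib := fun x y z => map_add (crossedMul k A H σ f x) y z
    right_distrib := fun x y z => LinearMap.map_add₂ (crossedMul k A H σ f) x y z
    zero_mul := fun x => LinearMap.map_zero₂ (crossedMul k A H σ f) x
    mul_zero := fun x => map_zero (crossedMul k A H σ f x)
    mul_assoc := cm_assoc G
    one_mul := cm_one_left G
    mul_one := cm_right G }

lemma E_mul (x y : E G) : x * y = crossedMul k A H σ f x y := rfl
lemma E_one : (1 : E G) = (1 : A) ⊗ₜ[k] (1 : H) := rfl

instance : Algebra k (E G) := Algebra.ofModule
  (fun r x y => LinearMap.map_smul₂ (crossedMul k A H σ f) r x y)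
  (fun r x y => map_smul (crossedMul k A H σ f x) r y)

/-- inclusion of `A` -/
def io : A →ₐ[k] E G := AlgHom.ofLinearMap ((TensorProduct.mk k A H).flip 1) rfl
  (fun a b => ((cm_left G a (b ⊗ₜ[k] (1 : H))).trans (Algebra.TensorProduct.tmul_mul_tmul a b 1 1 |>.trans
    (by rw [mul_one]; rfl))).symm)

lemma io_apply (a : A) : io G a = a ⊗ₜ[k] (1 : H) := rfl

/-- `γ` -/
def ga : W k H (E G) := toConv (gam k A H)
lemma ga_apply (h : H) : ga G h = (1 : A) ⊗ₜ[k] h := rfl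

lemma io_mul_ga (a : A) (h : H) : io G a * ga G h = a ⊗ₜ[k] h :=
  (cm_left G a ((1 : A) ⊗ₜ[k] h)).trans (by simp)

lemma ga_ga : pre (p1 k H H) (ga G) * pre (p2 k H H) (ga G) =
    post (io G) (fW f) * pre (mu k H) (ga G) := by
  apply W_ext; intro h l
  rw [p1_mul_p2, conv_tmul _ _ _ _ (ℛ k h) (ℛ k l)]
  refine (cm_gam G h l).trans ?_
  rw [Z0, conv_tmul _ _ _ _ (ℛ k h) (ℛ k l)]
  refine Finset.sum_congr rfl fun i _ => Finset.sum_congr rfl fun j _ => ?_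
  refine Eq.trans ?_ (io_mul_ga G _ _).symm
  simp

lemma f_scalar (G : Good σ f finv) (x : H ⊗[k] H) : ∃ c : k, fW f x = c • (1 : A) := by
  induction x with
  | zero => exact ⟨0, by simp⟩
  | tmul h l => exact G.fk h l
  | add x y hx hy =>
    obtain ⟨c, hc⟩ := hx
    obtain ⟨d, hd⟩ := hy
    exact ⟨c + d, by rw [map_add, hc, hd, add_smul]⟩

lemma f_central (x : H ⊗[k] H) (e : E G) :
    e * post (io G) (fW f) x = post (io G) (fW f) x * e := by
  obtain ⟨c, hc⟩ := f_scalar G x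
  rw [post_apply, hc]; simp

lemma f_inv1 : post (io G) (fW f) * post (io G) (fW finv) = 1 := by
  rw [← map_mul, G.inv1, map_one]
lemma f_inv2 : post (io G) (fW finv) * post (io G) (fW f) = 1 := by
  rw [← map_mul, G.inv2, map_one]

lemma finv_central (x : H ⊗[k] H) (e : E G) :
    e * post (io G) (fW finv) x = post (io G) (fW finv) x * e :=
  inv_comm (f_inv1 G) (f_inv2 G) e (fun c => f_central G c e) x

end RingE

section Anti
variable {k H : Type*} [CommRing k] [Ring H] [HopfAlgebra k H]

variable (k H) in
/-- identity -/
def idW : W k H H := toConv LinearMap.id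
variable (k H) in
/-- antipode -/
def SW : W k H H := toConv (HopfAlgebra.antipode (R := k))

lemma S_id : SW k H * idW k H = 1 := LinearMap.antipode_mul_id
lemma id_S : idW k H * SW k H = 1 := LinearMap.id_mul_antipode

lemma post_id {B B' : Type*} [Ring B] [Algebra k B] [Ring B'] [Algebra k B'] (φ : B →ₐ[k] B')
  (u : W k H B) {B'' : Type*} [Ring B''] [Algebra k B''] (ψ : B' →ₐ[k] B'') :
  post ψ (post φ u) = post (ψ.comp φ) u := rfl

lemma delta_id : post (Bialgebra.comulAlgHom k H) (idW k H) =
    post (iL k H H) (idW k H) * post (iR k H H) (idW k H) := by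
  apply WithConv.ext; ext h
  refine Eq.trans ?_ ((ℛ k h).convMul_apply _ _).symm
  simpa [idW] using (ℛ k h).eq.symm

lemma delta_S : post (Bialgebra.comulAlgHom k H) (SW k H) =
    post (iR k H H) (SW k H) * post (iL k H H) (SW k H) := by
  symm
  apply left_inv_eq_right_inv (a := post (Bialgebra.comulAlgHom k H) (idW k H))
  · rw [delta_id, mul_assoc, ← mul_assoc (post (iL k H H) (SW k H)), ← map_mul, S_id, map_one,
      one_mul, ← map_mul, S_id, map_one]
  · rw [← map_mul, id_S, map_one]

end Anti
end CPM

namespace CPM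
open TensorProduct Coalgebra WithConv

noncomputable section Anti2
variable (k H : Type*) [CommRing k] [Ring H] [HopfAlgebra k H]

/-- `y ↦ S y₁ ⊗ y₂` -/
def TT : W k H (H ⊗[k] H) := post (iL k H H) (SW k H) * post (iR k H H) (idW k H)
/-- `y ↦ y₁ ⊗ S y₂` -/
def TT' : W k H (H ⊗[k] H) := post (iL k H H) (idW k H) * post (iR k H H) (SW k H)

abbrev B4 := (H ⊗[k] H) ⊗[k] (H ⊗[k] H)
abbrev a1 : H →ₐ[k] B4 k H :=
  (Algebra.TensorProduct.includeLeft : (H ⊗[k] H) →ₐ[k] B4 k H).comp (iL k H H)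
abbrev a2 : H →ₐ[k] B4 k H :=
  (Algebra.TensorProduct.includeLeft : (H ⊗[k] H) →ₐ[k] B4 k H).comp (iR k H H)
abbrev a3 : H →ₐ[k] B4 k H :=
  (Algebra.TensorProduct.includeRight : (H ⊗[k] H) →ₐ[k] B4 k H).comp (iL k H H)
abbrev a4 : H →ₐ[k] B4 k H :=
  (Algebra.TensorProduct.includeRight : (H ⊗[k] H) →ₐ[k] B4 k H).comp (iR k H H)

/-- comultiplication of the tensor square -/
abbrev DD : H ⊗[k] H →ₐ[k] B4 k H := Bialgebra.comulAlgHom k (H ⊗[k] H)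

/-- middle maps -/
abbrev mL : H ⊗[k] H →ₐ[k] B4 k H := Algebra.TensorProduct.map (iL k H H) (iL k H H)
abbrev mR : H ⊗[k] H →ₐ[k] B4 k H := Algebra.TensorProduct.map (iR k H H) (iR k H H)

lemma DD_L : (DD k H).comp (iL k H H) = (mL k H).comp (Bialgebra.comulAlgHom k H) := by
  ext h
  simp only [AlgHom.comp_apply, Bialgebra.comulAlgHom_apply,
    Algebra.TensorProduct.includeLeft_apply, TensorProduct.comul_tmul, Bialgebra.comul_one,
    Algebra.TensorProduct.one_def]
  rw [← (ℛ k h).eq]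
  simp [sum_tmul]

lemma DD_R : (DD k H).comp (iR k H H) = (mR k H).comp (Bialgebra.comulAlgHom k H) := by
  ext h
  simp only [AlgHom.comp_apply, Bialgebra.comulAlgHom_apply,
    Algebra.TensorProduct.includeRight_apply, TensorProduct.comul_tmul, Bialgebra.comul_one,
    Algebra.TensorProduct.one_def]
  rw [← (ℛ k h).eq]
  simp [tmul_sum]

lemma mL_L : (mL k H).comp (iL k H H) = a1 k H := by ext h; simp [Algebra.TensorProduct.one_def]
lemma mL_R : (mL k H).comp (iR k H H) = a3 k H := by ext h; simp [Algebra.TensorProduct.one_def]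
lemma mR_L : (mR k H).comp (iL k H H) = a2 k H := by ext h; simp [Algebra.TensorProduct.one_def]
lemma mR_R : (mR k H).comp (iR k H H) = a4 k H := by ext h; simp [Algebra.TensorProduct.one_def]

lemma DD_TT : post (DD k H) (TT k H) =
    post (a3 k H) (SW k H) * ((post (a1 k H) (SW k H) * post (a2 k H) (idW k H)) *
      post (a4 k H) (idW k H)) := by
  rw [TT, map_mul, post_id, post_id, DD_L, DD_R, ← post_id, ← post_id, delta_S, delta_id,
    map_mul, map_mul, post_id, post_id, post_id, post_id, mL_L, mL_R, mR_L, mR_R]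
  simp only [mul_assoc]

lemma DD_TT' : post (DD k H) (TT' k H) =
    post (a1 k H) (idW k H) * ((post (a3 k H) (idW k H) * post (a4 k H) (SW k H)) *
      post (a2 k H) (SW k H)) := by
  rw [TT', map_mul, post_id, post_id, DD_L, DD_R, ← post_id, ← post_id, delta_S, delta_id,
    map_mul, map_mul, post_id, post_id, post_id, post_id, mL_L, mL_R, mR_L, mR_R]
  simp only [mul_assoc]

lemma TT_apply {ι : Type*} (y : H) (r : Coalgebra.Repr k y ι) :
    TT k H y = ∑ i ∈ r.index, HopfAlgebra.antipode (R := k) (r.left i) ⊗ₜ r.right i := by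
  rw [TT, r.convMul_apply]; simp [idW, SW]

lemma TT'_apply {ι : Type*} (y : H) (r : Coalgebra.Repr k y ι) :
    TT' k H y = ∑ i ∈ r.index, r.left i ⊗ₜ HopfAlgebra.antipode (R := k) (r.right i) := by
  rw [TT', r.convMul_apply]; simp [idW, SW]

lemma mu_TT (y : H) : mu k H (TT k H y) = counit (R := k) y • 1 := by
  rw [TT_apply k H y (ℛ k y), map_sum]
  have := HopfAlgebra.sum_antipode_mul_eq_smul (ℛ k y)
  simpa using this

lemma mu_TT' (y : H) : mu k H (TT' k H y) = counit (R := k) y • 1 := by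
  rw [TT'_apply k H y (ℛ k y), map_sum]
  have := HopfAlgebra.sum_mul_antipode_eq_smul (ℛ k y)
  simpa using this

variable {k H}
variable {B : Type*} [Ring B] [Algebra k B]

/-- evaluation of a convolution product on `S y₁ ⊗ y₂` -/
lemma conv_TT (u v : W k (H ⊗[k] H) B) (y : H) :
    (u * v) (TT k H y) = ∑ i ∈ (ℛ k y).index, ∑ j ∈ (ℛ k ((ℛ k y).right i)).index,
      u (TT k H ((ℛ k ((ℛ k y).right i)).left j)) *
        v (HopfAlgebra.antipode (R := k) ((ℛ k y).left i) ⊗ₜ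
          ((ℛ k ((ℛ k y).right i)).right j)) := by
  rw [LinearMap.convMul_apply]
  change LinearMap.mul' k B (TensorProduct.map u.ofConv v.ofConv (post (DD k H) (TT k H) y)) = _
  rw [DD_TT, (ℛ k y).convMul_apply, map_sum, map_sum]
  refine Finset.sum_congr rfl fun i _ => ?_
  rw [(ℛ k ((ℛ k y).right i)).convMul_apply, Finset.mul_sum, map_sum, map_sum]
  refine Finset.sum_congr rfl fun j _ => ?_
  rw [(ℛ k ((ℛ k ((ℛ k y).right i)).left j)).convMul_apply, TT_apply _ _ _ (ℛ k _)]
  simp only [map_sum, Finset.sum_mul, Finset.mul_sum]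
  refine Finset.sum_congr rfl fun p _ => ?_
  simp [idW, SW]

lemma conv_TT' (u v : W k (H ⊗[k] H) B) (y : H) :
    (u * v) (TT' k H y) = ∑ i ∈ (ℛ k y).index, ∑ j ∈ (ℛ k ((ℛ k y).right i)).index,
      u ((ℛ k y).left i ⊗ₜ
          HopfAlgebra.antipode (R := k) ((ℛ k ((ℛ k y).right i)).right j)) *
      v (TT' k H ((ℛ k ((ℛ k y).right i)).left j)) := by
  rw [LinearMap.convMul_apply]
  change LinearMap.mul' k B (TensorProduct.map u.ofConv v.ofConv (post (DD k H) (TT' k H) y)) = _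
  rw [DD_TT', (ℛ k y).convMul_apply, map_sum, map_sum]
  refine Finset.sum_congr rfl fun i _ => ?_
  rw [(ℛ k ((ℛ k y).right i)).convMul_apply, Finset.mul_sum, map_sum, map_sum]
  refine Finset.sum_congr rfl fun j _ => ?_
  rw [(ℛ k ((ℛ k ((ℛ k y).right i)).left j)).convMul_apply, TT'_apply _ _ _ (ℛ k _)]
  simp only [map_sum, Finset.sum_mul, Finset.mul_sum]
  refine Finset.sum_congr rfl fun p _ => ?_
  simp [idW, SW]

end Anti2

noncomputable section GI
variable {k A H : Type*} [CommRing k] [Ring A] [Algebra k A] [Ring H] [HopfAlgebra k H]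
variable {σ : H →ₗ[k] A →ₗ[k] A} {f finv : H →ₗ[k] H →ₗ[k] A}
variable (G : Good σ f finv)

/-- `γ⁻¹` -/
def gi : W k H (E G) := toConv (gammaInv k A H finv)
/-- `γ ∘ S` -/
def gS : W k H (E G) := toConv (gam k A H ∘ₗ HopfAlgebra.antipode (R := k))
lemma gS_apply (h : H) : gS G h = ga G (HopfAlgebra.antipode (R := k) h) := rfl

/-- `h ↦ finv (S h₁, h₂)` -/
def gg (finv : H →ₗ[k] H →ₗ[k] A) : W k H A := toConv ((fW finv).ofConv ∘ₗ (TT k H).ofConv)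
lemma gg_apply (h : H) : gg finv h = fW finv (TT k H h) := rfl
/-- `h ↦ f (h₁, S h₂)` -/
def pp (f : H →ₗ[k] H →ₗ[k] A) : W k H A := toConv ((fW f).ofConv ∘ₗ (TT' k H).ofConv)
lemma pp_apply (h : H) : pp f h = fW f (TT' k H h) := rfl

lemma gi_eq : gi G = gS G * post (io G) (gg finv) := by
  apply WithConv.ext; ext h
  refine Eq.trans ?_ ((ℛ k h).convMul_apply _ _).symm
  have e : ∀ i, gS G ((ℛ k h).left i) * post (io G) (gg finv) ((ℛ k h).right i) =
    (gg finv ((ℛ k h).right i) ⊗ₜ[k] HopfAlgebra.antipode (R := k) ((ℛ k h).left i)) := by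
    intro i
    rw [← io_mul_ga G]
    exact finv_central G _ _
  simp only [e]
  change gammaInv k A H finv h = _
  simp only [gammaInv, LinearMap.comp_apply]
  conv_lhs => rw [← (ℛ k h).eq]
  simp only [map_sum]
  refine Finset.sum_congr rfl fun i _ => ?_
  rw [gg_apply, TT_apply _ _ _ (ℛ k _), LinearMap.lTensor_tmul]
  conv_lhs => rw [← (ℛ k ((ℛ k h).right i)).eq]
  simp [tmul_sum, sum_tmul]

lemma ga_one : ga G 1 = 1 := rfl

lemma gi_ga : gi G * ga G = 1 := by
  have e : pre (mu k H) (ga G) = post (io G) (fW finv) *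
      (pre (p1 k H H) (ga G) * pre (p2 k H H) (ga G)) := by
    rw [ga_ga, ← mul_assoc, f_inv2, one_mul]
  apply WithConv.ext; ext y
  have h1 : pre (mu k H) (ga G) (TT k H y) = counit (R := k) y • (1 : E G) := by
    rw [pre_apply, mu_TT, map_smul, ga_one]
  rw [e, conv_TT] at h1
  refine Eq.trans ?_ (h1.trans ?_)
  · rw [gi_eq, mul_assoc]
    refine ((ℛ k y).convMul_apply _ _).trans ?_
    refine Finset.sum_congr rfl fun i _ => ?_
    rw [(ℛ k ((ℛ k y).right i)).convMul_apply, Finset.mul_sum]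
    refine Finset.sum_congr rfl fun j _ => ?_
    rw [p1_mul_p2, ← mul_assoc, ← mul_assoc]
    congr 1
    exact finv_central G _ _
  · simp [LinearMap.convOne_def, Algebra.algebraMap_eq_smul_one]

lemma ga_gS : ga G * gS G = post (io G) (pp f) := by
  apply WithConv.ext; ext y
  have e := congrArg (fun u : W k (H ⊗[k] H) (E G) => u (TT' k H y)) (ga_ga G)
  refine Eq.trans ?_ (Eq.trans e ?_)
  · refine ((ℛ k y).convMul_apply _ _).trans ?_
    rw [TT'_apply _ _ _ (ℛ k y)]
    simp only [map_sum]
    refine Finset.sum_congr rfl fun i _ => ?_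
    rw [p1_mul_p2]; rfl
  · rw [conv_TT']
    change _ = io G (pp f y)
    rw [pp_apply, TT'_apply _ _ _ (ℛ k y), map_sum, map_sum]
    refine Finset.sum_congr rfl fun i _ => ?_
    conv_rhs => rw [← sum_counit_smul (ℛ k ((ℛ k y).right i))]
    simp only [map_sum, tmul_sum, map_smul, tmul_smul]
    refine Finset.sum_congr rfl fun j _ => ?_
    rw [pre_apply, mu_TT', map_smul, ga_one, mul_smul_comm, mul_one]
    rfl

/-- `id ⊗ ε` on `E` -/
def epsE : E G →ₗ[k] A :=
  (show A ⊗[k] H →ₗ[k] A from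
    (TensorProduct.rid k A).toLinearMap ∘ₗ LinearMap.lTensor A (counit (R := k)))

lemma epsE_apply (a : A) (h : H) : epsE G (io G a * ga G h) = counit (R := k) h • a := by
  rw [io_mul_ga]; rfl

lemma cancel (u : W k H A) (h : post (io G) u * ga G = ga G) : u = 1 := by
  apply WithConv.ext; ext y
  have e : epsE G ((post (io G) u * ga G) y) = epsE G (ga G y) := by rw [h]
  rw [(ℛ k y).convMul_apply, map_sum, ← one_mul (ga G y), ← map_one (io G), epsE_apply] at e
  simp only [post_apply, epsE_apply] at e
  change u y = _
  conv_lhs => rw [← sum_smul_counit (ℛ k y)]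
  simp only [map_sum, map_smul, e]
  simp [LinearMap.convOne_def, Algebra.algebraMap_eq_smul_one]

lemma ga_gi : ga G * gi G = 1 := by
  have h : ga G * gi G = post (io G) (pp f * gg finv) := by
    rw [gi_eq, ← mul_assoc, ga_gS, map_mul]
  have h2 : pp f * gg finv = 1 := by
    apply cancel G
    rw [← h, mul_assoc, gi_ga, mul_one]
  rw [h, h2, map_one]

lemma gi_gi : pre (p2 k H H) (gi G) * pre (p1 k H H) (gi G) =
    pre (mu k H) (gi G) * post (io G) (fW finv) := by
  apply left_inv_eq_right_inv (a := pre (p1 k H H) (ga G) * pre (p2 k H H) (ga G))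
  · rw [mul_assoc, ← mul_assoc (pre (p1 k H H) (gi G)), ← map_mul, gi_ga, map_one, one_mul,
      ← map_mul, gi_ga, map_one]
  · rw [ga_ga, mul_assoc, ← mul_assoc (pre (mu k H) (ga G)), ← map_mul, ga_gi, map_one, one_mul,
      f_inv1]

lemma gi_one : gi G 1 = 1 := by
  have e : (gi G * ga G) 1 = (1 : W k H (E G)) 1 := by rw [gi_ga]
  rw [(repOne k H).convMul_apply] at e
  simpa [repOne, ga_one, LinearMap.convOne_def] using e

end GI
end CPM

namespace CPM
open TensorProduct Coalgebra WithConv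

noncomputable section Act
variable {k H : Type*} [CommRing k] [Ring H] [HopfAlgebra k H]
variable {B : Type*} [Ring B] [Algebra k B]

/-- generic multiplicativity -/
lemma act_mul (R s L : W k H B) (F F' : W k (H ⊗[k] H) B)
    (hR : pre (p1 k H H) R * pre (p2 k H H) R = pre (mu k H) R * F')
    (hL : pre (p1 k H H) L * pre (p2 k H H) L = F * pre (mu k H) L)
    (hs : pre (p1 k H H) s * pre (p2 k H H) s * F = F * pre (mu k H) s)
    (hF : F' * F = 1)
    (hRs : ∀ c d, s c * R d = R d * s c) (hRL : ∀ c d, L c * R d = R d * L c)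
    (hsL : ∀ c d, L c * s d = s d * L c) (l h : H) :
    (R * (s * L)) (l * h) = (R * (s * L)) l * (R * (s * L)) h := by
  rw [← p1_mul_p2]
  change pre (mu k H) (R * (s * L)) (l ⊗ₜ h) = _
  congr 1
  congr 1
  have e1 := p1_p2_comm s R hRs
  have e2 := p1_p2_comm L R hRL
  have e3 := p1_p2_comm L s hsL
  simp only [map_mul]
  symm
  set R1 := pre (p1 k H H) R
  set R2 := pre (p2 k H H) R
  set s1 := pre (p1 k H H) s
  set s2 := pre (p2 k H H) s
  set L1 := pre (p1 k H H) L
  set L2 := pre (p2 k H H) L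
  calc R1 * (s1 * L1) * (R2 * (s2 * L2)) = R1 * s1 * (L1 * R2) * s2 * L2 := by noncomm_ring
    _ = R1 * (s1 * R2) * L1 * s2 * L2 := by rw [e2]; noncomm_ring
    _ = (R1 * R2) * s1 * (L1 * s2) * L2 := by rw [e1]; noncomm_ring
    _ = (R1 * R2) * (s1 * s2) * (L1 * L2) := by rw [e3]; noncomm_ring
    _ = pre (mu k H) R * F' * (s1 * s2 * F) * pre (mu k H) L := by rw [hR, hL]; noncomm_ring
    _ = pre (mu k H) R * (F' * F) * (pre (mu k H) s * pre (mu k H) L) := by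
      rw [hs]; noncomm_ring
    _ = _ := by rw [hF, mul_one]

/-- evaluation at one -/
def evOne : W k H B →* B where
  toFun u := u 1
  map_one' := by simp [LinearMap.convOne_def]
  map_mul' u v := by rw [(repOne k H).convMul_apply]; simp [repOne]

lemma evOne_apply (u : W k H B) : evOne u = u 1 := rfl

/-- commuting with the values of a product -/
lemma comm_prod (b : B) : ∀ (L : List (W k H B)), (∀ u ∈ L, ∀ h, b * u h = u h * b) →
    ∀ h, b * L.prod h = L.prod h * b
  | [], _, h => by
    simp only [List.prod_nil, LinearMap.convOne_def]
    exact (Algebra.commutes _ _).symm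
  | u :: L, hL, h => by
    rw [List.prod_cons, (ℛ k h).convMul_apply, Finset.mul_sum, Finset.sum_mul]
    refine Finset.sum_congr rfl fun i _ => ?_
    rw [← mul_assoc, hL u (by simp), mul_assoc, comm_prod b L (fun v hv => hL v (by simp [hv])),
      mul_assoc]

lemma tw_prod (F : W k (H ⊗[k] H) B) : ∀ (r : ℕ) (u : Fin r → W k H B)
    (_ : ∀ i j, i ≠ j → ∀ c d, u i c * u j d = u j d * u i c)
    (_ : ∀ i, pre (p1 k H H) (u i) * pre (p2 k H H) (u i) * F = F * pre (mu k H) (u i)),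
    pre (p1 k H H) (List.ofFn u).prod * pre (p2 k H H) (List.ofFn u).prod * F =
      F * pre (mu k H) (List.ofFn u).prod
  | 0, u, _, _ => by simp
  | r + 1, u, hc, ht => by
    have ih := tw_prod F r (fun i => u i.succ) (fun i j hij => hc _ _ (by simpa using hij))
      (fun i => ht _)
    rw [List.ofFn_succ, List.prod_cons]
    set v := (List.ofFn fun i => u i.succ).prod with hv
    have e := p1_p2_comm v (u 0) (fun c d => by
      refine (comm_prod (u 0 d) _ ?_ c).symm
      intro w hw h
      rw [List.mem_ofFn] at hw
      obtain ⟨i, rfl⟩ := hw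
      exact hc _ _ (Fin.succ_ne_zero i).symm _ _)
    simp only [map_mul]
    have h0 := ht 0
    set u1 := pre (p1 k H H) (u 0)
    set u2 := pre (p2 k H H) (u 0)
    set v1 := pre (p1 k H H) v
    set v2 := pre (p2 k H H) v
    calc u1 * v1 * (u2 * v2) * F = u1 * (v1 * u2) * v2 * F := by noncomm_ring
      _ = u1 * u2 * (v1 * v2 * F) := by rw [e]; noncomm_ring
      _ = (u1 * u2 * F) * pre (mu k H) v := by rw [ih]; noncomm_ring
      _ = _ := by rw [h0]; noncomm_ring

lemma swSum_map {M N : Type*} [AddCommMonoid M] [AddCommMonoid N] (φ : M →+ N)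
    (n : H → ℕ) (c₁ c₂ : H → ℕ → H) : ∀ (r : ℕ) (h : H) (F : (Fin (r + 1) → H) → M),
    φ (swSum (H := H) n c₁ c₂ r h F) = swSum (H := H) n c₁ c₂ r h (fun v => φ (F v))
  | 0, h, F => rfl
  | r + 1, h, F => by
    simp only [swSum, map_sum]
    exact Finset.sum_congr rfl fun i _ => swSum_map φ n c₁ c₂ r _ _

lemma swSum_prod {n : H → ℕ} {c₁ c₂ : H → ℕ → H} (hrep : IsSweedlerRep k H n c₁ c₂) :
    ∀ (r : ℕ) (u : Fin (r + 1) → W k H B) (h : H),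
    (List.ofFn u).prod h =
      swSum (H := H) n c₁ c₂ r h (fun v => (List.ofFn fun i => u i (v i)).prod)
  | 0, u, h => by simp [swSum]
  | r + 1, u, h => by
    rw [List.ofFn_succ, List.prod_cons, (rp hrep h).convMul_apply]
    simp only [swSum]
    refine Finset.sum_congr rfl fun i _ => ?_
    rw [swSum_prod hrep r]
    refine (swSum_map (AddMonoidHom.mulLeft (u 0 ((rp hrep h).left i))) n c₁ c₂ r _ _).trans ?_
    congr 1
    funext v
    conv_rhs => rw [List.ofFn_succ, List.prod_cons]
    rfl

lemma prod_single {M : Type*} [Monoid M] : ∀ (r : ℕ) (g : Fin r → M) (j : Fin r)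
    (_ : ∀ i, i ≠ j → g i = 1), (List.ofFn g).prod = g j
  | r + 1, g, j, hg => by
    rw [List.ofFn_succ, List.prod_cons]
    induction j using Fin.cases with
    | zero =>
      have : (fun i : Fin r => g i.succ) = fun _ => 1 :=
        funext fun i => hg _ (Fin.succ_ne_zero i)
      rw [this]; simp
    | succ j =>
      rw [hg 0 (Fin.succ_ne_zero j).symm, one_mul]
      exact prod_single r (fun i => g i.succ) j (fun i hi => hg _ (by simpa using hi))

lemma prod_mulSingle {M : Type*} [Monoid M] (r : ℕ) (φ : Fin r → M) :
    (List.ofFn fun i => (Pi.mulSingle i (φ i) : Fin r → M)).prod = φ := by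
  funext j
  have := map_list_prod (Pi.evalMonoidHom (fun _ : Fin r => M) j)
    (List.ofFn fun i => (Pi.mulSingle i (φ i) : Fin r → M))
  refine this.trans ?_
  rw [List.map_ofFn, prod_single r _ j]
  · simp
  · intro i hi
    simp [Pi.mulSingle_eq_of_ne hi.symm]

end Act

noncomputable section Tens
variable {k : Type*} [CommRing k] {V X : Type*} [AddCommGroup V] [Module k V]
  [AddCommGroup X] [Module k X] {r : ℕ}

/-- operators on a single tensor factor -/
def J1 (i : Fin r) : Module.End k V →ₐ[k] Module.End k (⨂[k]^r V) :=
  AlgHom.ofLinearMap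
    ((PiTensorProduct.mapMultilinear k (fun _ : Fin r => V) (fun _ => V)).toLinearMap 1 i)
    (map_one (PiTensorProduct.mapMonoidHom.comp (MonoidHom.mulSingle (fun _ => Module.End k V) i)))
    (map_mul (PiTensorProduct.mapMonoidHom.comp (MonoidHom.mulSingle (fun _ => Module.End k V) i)))

lemma J1_apply (i : Fin r) (φ : Module.End k V) : J1 i φ =
    PiTensorProduct.mapMonoidHom (Pi.mulSingle i φ : Fin r → Module.End k V) := rfl

lemma J1_comm {i j : Fin r} (hij : i ≠ j) (φ ψ : Module.End k V) :
    J1 i φ * J1 j ψ = J1 j ψ * J1 i φ := by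
  rw [J1_apply, J1_apply, ← map_mul, ← map_mul]
  congr 1
  exact Pi.mulSingle_commute (f := fun _ : Fin r => Module.End k V) hij φ ψ

lemma J1_prod (φ : Fin r → Module.End k V) :
    (List.ofFn fun i => J1 i (φ i)).prod = PiTensorProduct.map φ := by
  have := map_list_prod (PiTensorProduct.mapMonoidHom (R := k) (s := fun _ : Fin r => V))
    (List.ofFn fun i => (Pi.mulSingle i (φ i) : Fin r → Module.End k V))
  rw [prod_mulSingle r φ, List.map_ofFn] at this
  exact this.symm

end Tens
end CPM

namespace CPM
open TensorProduct Coalgebra WithConv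

noncomputable section Final
variable {k A H : Type*} [CommRing k] [Ring A] [Algebra k A] [Ring H] [HopfAlgebra k H]
variable {σ : H →ₗ[k] A →ₗ[k] A} {f finv : H →ₗ[k] H →ₗ[k] A}

variable (k A) in
/-- the quotient by scalars -/
abbrev Abar := A ⧸ (Submodule.span k {(1 : A)})

/-- descent to the quotient -/
def desc {C : Type*} [AddCommGroup C] [Module k C] [Coalgebra k C] (u : C →ₗ[k] A →ₗ[k] A)
    (hu : ∀ c, ∃ d : k, u c 1 = d • (1 : A)) : W k C (Module.End k (Abar k A)) :=
  toConv
  { toFun := fun c => Submodule.mapQ _ _ (u c) (by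
      rw [Submodule.span_singleton_le_iff_mem, Submodule.mem_comap]
      obtain ⟨d, hd⟩ := hu c
      rw [hd]
      exact Submodule.smul_mem _ _ (Submodule.mem_span_singleton_self _))
    map_add' := fun c d => by
      apply LinearMap.ext; intro x
      obtain ⟨a, rfl⟩ := Submodule.mkQ_surjective _ x
      simp
    map_smul' := fun c d => by
      apply LinearMap.ext; intro x
      obtain ⟨a, rfl⟩ := Submodule.mkQ_surjective _ x
      simp }

lemma desc_apply {C : Type*} [AddCommGroup C] [Module k C] [Coalgebra k C] (u : C →ₗ[k] A →ₗ[k] A)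
    (hu : ∀ c, ∃ d : k, u c 1 = d • (1 : A)) (c : C) (a : A) :
    desc u hu c ((Submodule.span k {(1 : A)}).mkQ a) = (Submodule.span k {(1 : A)}).mkQ (u c a) :=
  rfl

variable (G : Good σ f finv)

/-- induced action on the quotient -/
def sb : W k H (Module.End k (Abar k A)) := desc σ (fun c => ⟨_, G.sone c⟩)

/-- multiplication by `f` on the quotient -/
def fb : W k (H ⊗[k] H) (Module.End k (Abar k A)) :=
  desc (LinearMap.mul k A ∘ₗ (fW f).ofConv) (fun c => by
    obtain ⟨d, hd⟩ := f_scalar G c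
    exact ⟨d, by simp [hd]⟩)

lemma fb_scalar (x : H ⊗[k] H) {c : k} (hc : fW f x = c • (1 : A)) : fb G x = c • 1 := by
  apply LinearMap.ext; intro y
  obtain ⟨a, rfl⟩ := Submodule.mkQ_surjective _ y
  rw [fb, desc_apply]
  simp [hc]

lemma tw_sb : pre (p1 k H H) (sb G) * pre (p2 k H H) (sb G) * fb G =
    fb G * pre (mu k H) (sb G) := by
  apply W_ext; intro l h
  apply LinearMap.ext; intro y
  obtain ⟨a, rfl⟩ := Submodule.mkQ_surjective _ y
  have e := congrArg (fun u : W k (H ⊗[k] H) A => (Submodule.span k {(1 : A)}).mkQ (u (l ⊗ₜ h)))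
    (G.twist a)
  rw [conv_tmul _ _ _ _ (ℛ k l) (ℛ k h), conv_tmul _ _ _ _ (ℛ k l) (ℛ k h), map_sum, map_sum] at e
  rw [conv_tmul _ _ _ _ (ℛ k l) (ℛ k h), conv_tmul _ _ _ _ (ℛ k l) (ℛ k h)]
  simp only [LinearMap.sum_apply]
  refine Eq.trans ?_ (e.trans ?_)
  · refine Finset.sum_congr rfl fun i _ => ?_
    rw [map_sum]
    refine Finset.sum_congr rfl fun j _ => ?_
    rw [p1_mul_p2]
    obtain ⟨c, hc⟩ := f_scalar G ((ℛ k l).right i ⊗ₜ (ℛ k h).right j)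
    rw [fb_scalar G _ hc, hc]
    simp only [mul_smul_comm, mul_one, map_smul, LinearMap.smul_apply]
    rfl
  · refine Finset.sum_congr rfl fun i _ => ?_
    rw [map_sum]
    rfl

variable (r : ℕ)

/-- the module -/
abbrev MM := (E G) ⊗[k] (⨂[k]^r (Abar k A))

/-- left multiplication -/
def ll : E G →ₐ[k] Module.End k (MM G r) :=
  (Module.End.rTensorAlgHom k (E G) (⨂[k]^r (Abar k A))).comp (Algebra.lmul k (E G))

/-- right multiplication -/
def rr : E G →ₗ[k] Module.End k (MM G r) :=
  (Module.End.rTensorAlgHom k (E G) (⨂[k]^r (Abar k A))).toLinearMap ∘ₗ (LinearMap.mul k (E G)).flip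

/-- operators on a tensor factor -/
def JJ (i : Fin r) : Module.End k (Abar k A) →ₐ[k] Module.End k (MM G r) :=
  (Module.End.lTensorAlgHom k (⨂[k]^r (Abar k A)) (E G)).comp (J1 i)

lemma ll_tmul (e x : E G) (y : ⨂[k]^r (Abar k A)) : ll G r e (x ⊗ₜ y) = (e * x) ⊗ₜ y := rfl
lemma rr_tmul (e x : E G) (y : ⨂[k]^r (Abar k A)) : rr G r e (x ⊗ₜ y) = (x * e) ⊗ₜ y := rfl
lemma JJ_tmul (i : Fin r) (φ : Module.End k (Abar k A)) (x : E G) (y : ⨂[k]^r (Abar k A)) :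
    JJ G r i φ (x ⊗ₜ y) = x ⊗ₜ (J1 i φ y) := rfl

lemma rr_mul (e e' : E G) : rr G r (e * e') = rr G r e' * rr G r e := by
  apply TensorProduct.ext'; intro x y
  rw [Module.End.mul_apply, rr_tmul, rr_tmul, rr_tmul, mul_assoc]

lemma ll_rr (e e' : E G) : ll G r e * rr G r e' = rr G r e' * ll G r e := by
  apply TensorProduct.ext'; intro x y
  rw [Module.End.mul_apply, Module.End.mul_apply, rr_tmul, ll_tmul, ll_tmul, rr_tmul, mul_assoc]

lemma ll_JJ (e : E G) (i : Fin r) (φ : Module.End k (Abar k A)) :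
    ll G r e * JJ G r i φ = JJ G r i φ * ll G r e := by
  apply TensorProduct.ext'; intro x y
  rw [Module.End.mul_apply, Module.End.mul_apply, JJ_tmul, ll_tmul, ll_tmul, JJ_tmul]

lemma rr_JJ (e : E G) (i : Fin r) (φ : Module.End k (Abar k A)) :
    rr G r e * JJ G r i φ = JJ G r i φ * rr G r e := by
  apply TensorProduct.ext'; intro x y
  rw [Module.End.mul_apply, Module.End.mul_apply, JJ_tmul, rr_tmul, rr_tmul, JJ_tmul]

lemma JJ_comm {i j : Fin r} (hij : i ≠ j) (φ ψ : Module.End k (Abar k A)) :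
    JJ G r i φ * JJ G r j ψ = JJ G r j ψ * JJ G r i φ := by
  have := congrArg (Module.End.lTensorAlgHom k (⨂[k]^r (Abar k A)) (E G)) (J1_comm hij φ ψ)
  simp only [map_mul] at this
  exact this

/-- the three ingredients -/
def RR : W k H (Module.End k (MM G r)) := toConv (rr G r ∘ₗ (gi G).ofConv)
def LL : W k H (Module.End k (MM G r)) := post (ll G r) (ga G)
def ss (i : Fin r) : W k H (Module.End k (MM G r)) := post (JJ G r i) (sb G)
def FF : W k (H ⊗[k] H) (Module.End k (MM G r)) := post (ll G r) (post (io G) (fW f))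
def FF' : W k (H ⊗[k] H) (Module.End k (MM G r)) := post (ll G r) (post (io G) (fW finv))

lemma RR_apply (h : H) : RR G r h = rr G r (gi G h) := rfl

lemma rr_finv (x : H ⊗[k] H) :
    rr G r (post (io G) (fW finv) x) = ll G r (post (io G) (fW finv) x) := by
  apply TensorProduct.ext'; intro z y
  rw [rr_tmul, ll_tmul, finv_central]

lemma hR : pre (p1 k H H) (RR G r) * pre (p2 k H H) (RR G r) =
    pre (mu k H) (RR G r) * FF' G r := by
  apply W_ext; intro l h
  rw [p1_mul_p2, RR_apply, RR_apply, ← rr_mul, ← p2_mul_p1, gi_gi, conv_tmul _ _ _ _ (ℛ k l) (ℛ k h),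
    conv_tmul _ _ _ _ (ℛ k l) (ℛ k h)]
  simp only [map_sum]
  refine Finset.sum_congr rfl fun i _ => Finset.sum_congr rfl fun j _ => ?_
  rw [rr_mul, rr_finv, ll_rr]
  rfl

lemma hL : pre (p1 k H H) (LL G r) * pre (p2 k H H) (LL G r) =
    FF G r * pre (mu k H) (LL G r) := by
  have := congrArg (post (ll G r)) (ga_ga G)
  simp only [map_mul] at this
  exact this

lemma hF : FF' G r * FF G r = 1 := by
  rw [FF', FF, ← map_mul, f_inv2, map_one]

lemma FF_eq (i : Fin r) : FF G r = post (JJ G r i) (fb G) := by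
  apply WithConv.ext; apply LinearMap.ext; intro x
  obtain ⟨c, hc⟩ := f_scalar G x
  change ll G r (io G (fW f x)) = JJ G r i (fb G x)
  rw [fb_scalar G x hc, hc]
  simp only [map_smul, map_one]

lemma hss (i : Fin r) : pre (p1 k H H) (ss G r i) * pre (p2 k H H) (ss G r i) * FF G r =
    FF G r * pre (mu k H) (ss G r i) := by
  rw [FF_eq G r i]
  have := congrArg (post (JJ G r i)) (tw_sb G)
  simp only [map_mul] at this
  exact this

/-- product of the middle operators -/
def mid : W k H (Module.End k (MM G r)) := (List.ofFn (ss G r)).prod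

/-- the action -/
def actW : W k H (Module.End k (MM G r)) := RR G r * (mid G r * LL G r)

lemma actW_mul (l h : H) : actW G r (l * h) = actW G r l * actW G r h := by
  refine act_mul (RR G r) (mid G r) (LL G r) (FF G r) (FF' G r) (hR G r) (hL G r) ?_ (hF G r)
    ?_ ?_ ?_ l h
  · exact tw_prod _ r (ss G r) (fun i j hij c d => JJ_comm G r hij _ _) (hss G r)
  · intro c d
    refine (comm_prod _ _ ?_ c).symm
    intro u hu h
    rw [List.mem_ofFn] at hu
    obtain ⟨i, rfl⟩ := hu
    exact rr_JJ G r _ _ _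
  · intro c d
    exact ll_rr G r _ _
  · intro c d
    refine comm_prod _ _ ?_ d
    intro u hu h
    rw [List.mem_ofFn] at hu
    obtain ⟨i, rfl⟩ := hu
    exact ll_JJ G r _ _ _

lemma sb_one : sb G 1 = 1 := by
  apply LinearMap.ext; intro y
  obtain ⟨a, rfl⟩ := Submodule.mkQ_surjective _ y
  rw [sb, desc_apply, G.onea]
  rfl

lemma rr_one : rr G r 1 = 1 := by
  apply TensorProduct.ext'; intro x y
  rw [rr_tmul, mul_one]; rfl

lemma actW_one : actW G r 1 = 1 := by
  rw [← evOne_apply, actW, map_mul, map_mul, mid, map_list_prod, List.map_ofFn]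
  have e1 : evOne (RR G r) = 1 := by rw [evOne_apply, RR_apply, gi_one, rr_one]
  have e2 : evOne (LL G r) = 1 := by rw [evOne_apply, LL, post_apply, ga_one, map_one]
  have e3 : evOne ∘ ss G r = fun _ => 1 := by
    funext i
    rw [Function.comp_apply, evOne_apply, ss, post_apply, sb_one, map_one]
  rw [e1, e2, e3]
  simp

lemma mid_op (φ : Fin r → Module.End k (Abar k A)) (x : E G) (y : ⨂[k]^r (Abar k A)) :
    (List.ofFn fun i => JJ G r i (φ i)).prod (x ⊗ₜ y) = x ⊗ₜ PiTensorProduct.map φ y := by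
  have := map_list_prod (Module.End.lTensorAlgHom k (⨂[k]^r (Abar k A)) (E G))
    (List.ofFn fun i => J1 i (φ i))
  rw [List.map_ofFn, J1_prod] at this
  change (List.ofFn (⇑(Module.End.lTensorAlgHom k (⨂[k]^r (Abar k A)) (E G)) ∘
    fun i => J1 i (φ i))).prod (x ⊗ₜ y) = _
  rw [← this]
  rfl

/-- full list of operators -/
def UU : Fin (r + 2) → W k H (Module.End k (MM G r)) :=
  Fin.cons (RR G r) (Fin.snoc (α := fun _ => W k H (Module.End k (MM G r))) (ss G r) (LL G r))

lemma prod_ends {M : Type*} [Monoid M] (u : Fin (r + 2) → M) :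
    (List.ofFn u).prod = u 0 * ((List.ofFn fun i : Fin r => u i.succ.castSucc).prod *
      u (Fin.last (r + 1))) := by
  rw [List.ofFn_succ, List.prod_cons, List.ofFn_succ', List.concat_eq_append, List.prod_append,
    List.prod_singleton]
  rfl

lemma UU_zero : UU G r 0 = RR G r := rfl
lemma UU_last : UU G r (Fin.last (r + 1)) = LL G r := by
  rw [UU, ← Fin.succ_last, Fin.cons_succ, Fin.snoc_last]
lemma UU_mid (i : Fin r) : UU G r i.succ.castSucc = ss G r i := by
  rw [UU, ← Fin.succ_castSucc, Fin.cons_succ, Fin.snoc_castSucc]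

lemma actW_eq : actW G r = (List.ofFn (UU G r)).prod := by
  rw [prod_ends, UU_zero, UU_last]
  simp only [UU_mid]
  rfl

lemma actW_formula {n : H → ℕ} {c₁ c₂ : H → ℕ → H} (hrep : IsSweedlerRep k H n c₁ c₂)
    (x : E G) (a : Fin r → A) (h : H) :
    actW G r h (x ⊗ₜ[k] (PiTensorProduct.tprod k fun i : Fin r =>
              (Submodule.span k {(1 : A)}).mkQ (a i))) =
      swSum (H := H) n c₁ c₂ (r + 1) h (fun v : Fin (r + 2) → H =>
        ((ga G (v (Fin.last (r + 1))) * x) * gi G (v 0)) ⊗ₜ[k]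
          (PiTensorProduct.tprod k fun i : Fin r =>
            (Submodule.span k {(1 : A)}).mkQ (σ (v i.succ.castSucc) (a i)))) := by
  rw [actW_eq, swSum_prod hrep]
  refine (swSum_map (LinearMap.applyₗ (R := k) (M := MM G r) (M₂ := MM G r)
    (x ⊗ₜ[k] (PiTensorProduct.tprod k fun i : Fin r =>
      (Submodule.span k {(1 : A)}).mkQ (a i)))).toAddMonoidHom n c₁ c₂ _ _ _).trans ?_
  congr 1
  funext v
  change (List.ofFn fun i => UU G r i (v i)).prod _ = _
  rw [prod_ends, UU_zero, UU_last]
  simp only [UU_mid]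
  rw [Module.End.mul_apply, Module.End.mul_apply, LL, post_apply, ll_tmul]
  have := mid_op G r (fun i => sb G (v i.succ.castSucc)) (ga G (v (Fin.last (r + 1))) * x)
    (PiTensorProduct.tprod k fun i : Fin r => (Submodule.span k {(1 : A)}).mkQ (a i))
  rw [PiTensorProduct.map_tprod] at this
  exact congrArg (RR G r (v 0)) this

end Final
end CPM

/-- Proposition 3.7, absolute case `K = k`. Assume `E = A #_f H` is a
crossed product with convolution invertible cocycle `f` taking values in `k·1_A`.  Let
`Ā = A/k·1_A` and `M_r = E ⊗ Ā^{⊗r}`.  Then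
`h ▶ (x ⊗ ā₁ ⊗ ⋯ ⊗ ā_r) = γ(h⁽³⁾) x γ⁻¹(h⁽¹⁾) ⊗ (a₁ ⊗ ⋯ ⊗ a_r)^{h⁽²⁾}` gives a
well-defined `k`-linear map making `M_r` a left `H`-module. -/
theorem crossed_product_module_structure
    (k A H : Type*) [CommRing k] [Ring A] [Algebra k A] [Ring H] [HopfAlgebra k H]
    (σ : H →ₗ[k] A →ₗ[k] A) (f finv : H →ₗ[k] H →ₗ[k] A)
    (n : H → ℕ) (c₁ c₂ : H → ℕ → H)
    (hrep : IsSweedlerRep k H n c₁ c₂)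
    (hweak : IsWeakAction k A H n c₁ c₂ σ)
    (hnormal : IsNormal k A H f)
    (hcocycle : IsCocycle k A H n c₁ c₂ σ f)
    (htwisted : IsTwistedModule k A H n c₁ c₂ σ f)
    (hinv : IsConvInverse k A H n c₁ c₂ f finv)
    (hfk : ∀ h l : H, ∃ c : k, f h l = c • (1 : A))
    (r : ℕ) :
    ∃ act : H →ₗ[k]
        ((A ⊗[k] H) ⊗[k] (⨂[k]^r (A ⧸ (Submodule.span k {(1 : A)})))) →ₗ[k]
          ((A ⊗[k] H) ⊗[k] (⨂[k]^r (A ⧸ (Submodule.span k {(1 : A)})))),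
      (∀ (x : A ⊗[k] H) (a : Fin r → A) (h : H),
        act h (x ⊗ₜ[k]
            (PiTensorProduct.tprod k fun i : Fin r =>
              (Submodule.span k {(1 : A)}).mkQ (a i))) =
          swSum (H := H) n c₁ c₂ (r + 1) h (fun v : Fin (r + 2) → H =>
            (crossedMul k A H σ f
                (crossedMul k A H σ f (gam k A H (v (Fin.last (r + 1)))) x)
                (gammaInv k A H finv (v 0))) ⊗ₜ[k]
              (PiTensorProduct.tprod k fun i : Fin r =>
                (Submodule.span k {(1 : A)}).mkQ (σ (v i.succ.castSucc) (a i))))) ∧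
      (∀ m, act (1 : H) m = m) ∧
      (∀ (h l : H) (m), act (l * h) m = act l (act h m)) := by
  have G := CPM.good_of σ f finv n c₁ c₂ hrep hweak hnormal hcocycle htwisted hinv hfk
  refine ⟨(CPM.actW G r).ofConv, ?_, ?_, ?_⟩
  · intro x a h
    exact CPM.actW_formula G r hrep x a h
  · intro m
    exact congrArg (fun t : Module.End k (CPM.MM G r) => t m) (CPM.actW_one G r)
  · intro h l m
    exact congrArg (fun t : Module.End k (CPM.MM G r) => t m) (CPM.actW_mul G r l h)
end

section
/- Assume conditions (i)–(iii) hold, so E = A #_f H is a crossed product. Then the k-linear map ν = id_A ⊗ Δ : E → E ⊗_k H is a homomorphism of unital k-algebras (where E ⊗_k H carries the tensor product algebra structure), it is coassociative, (ν ⊗ id_H) ∘ ν = (id_E ⊗ Δ) ∘ ν, and counital, (id_E ⊗ ε) ∘ ν = id_E. In other words, ν makes E a right H-comodule algebra. -/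
open TensorProduct

section Statement5

variable (k A H : Type*) [CommRing k] [Ring A] [Algebra k A] [Ring H] [HopfAlgebra k H]

/-- The tensor product algebra multiplication on `(A #_f H) ⊗[k] H`:
`(x ⊗ h)(y ⊗ l) = xy ⊗ hl`. -/
noncomputable def mulEH (σ : H →ₗ[k] A →ₗ[k] A) (f : H →ₗ[k] H →ₗ[k] A) :
    ((A ⊗[k] H) ⊗[k] H) →ₗ[k] ((A ⊗[k] H) ⊗[k] H) →ₗ[k] (A ⊗[k] H) ⊗[k] H :=
  TensorProduct.curry
    ((TensorProduct.map (TensorProduct.lift (crossedMul k A H σ f)) (LinearMap.mul' k H)) ∘ₗ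
      (TensorProduct.tensorTensorTensorComm k (A ⊗[k] H) H (A ⊗[k] H) H).toLinearMap)

end Statement5

section Helpers

variable (k A H : Type*) [CommRing k] [Ring A] [Algebra k A] [Ring H] [HopfAlgebra k H]

/-- `φ(h, w) = a b^{h⁽¹⁾} f(h⁽²⁾, w)`, as a bilinear map. -/
noncomputable def phiE (σ : H →ₗ[k] A →ₗ[k] A) (f : H →ₗ[k] H →ₗ[k] A) (a b : A) :
    H →ₗ[k] H →ₗ[k] A :=
  TensorProduct.curry
    ((LinearMap.mulLeft k a) ∘ₗ (LinearMap.mul' k A) ∘ₗ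
      (TensorProduct.map (σ.flip b) (TensorProduct.lift f)) ∘ₗ
      (TensorProduct.assoc k H H H).toLinearMap ∘ₗ
      (LinearMap.rTensor H (Coalgebra.comul (R := k))))

/-- The bilinear map sending a pair of pure tensors to the first entries under φ, tensored with products. -/
noncomputable def bigQ (φ : H →ₗ[k] H →ₗ[k] A) :
    (H ⊗[k] (H ⊗[k] H)) →ₗ[k] (H ⊗[k] (H ⊗[k] H)) →ₗ[k] (A ⊗[k] H) ⊗[k] H :=
  TensorProduct.curry
    ((TensorProduct.assoc k A H H).symm.toLinearMap ∘ₗ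
      (TensorProduct.map (TensorProduct.lift φ) (LinearMap.mul' k (H ⊗[k] H))) ∘ₗ
      (TensorProduct.tensorTensorTensorComm k H (H ⊗[k] H) H (H ⊗[k] H)).toLinearMap)

theorem bigQ_tmul (φ : H →ₗ[k] H →ₗ[k] A) (u u' : H) (v v' : H ⊗[k] H) :
    bigQ k A H φ (u ⊗ₜ v) (u' ⊗ₜ v') =
      (TensorProduct.assoc k A H H).symm (φ u u' ⊗ₜ[k] (v * v')) := by
  simp [bigQ]

theorem crossedMul_tmul (σ : H →ₗ[k] A →ₗ[k] A) (f : H →ₗ[k] H →ₗ[k] A)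
    (n : H → ℕ) (c₁ c₂ : H → ℕ → H) (hrep : IsSweedlerRep k H n c₁ c₂)
    (a b : A) (h l : H) :
    crossedMul k A H σ f (a ⊗ₜ h) (b ⊗ₜ l) =
      ∑ i ∈ Finset.range (n h), ∑ j ∈ Finset.range (n l),
        phiE k A H σ f a b (c₁ h i) (c₁ l j) ⊗ₜ[k] (c₂ h i * c₂ l j) := by
  have e : ∀ (u : H ⊗[k] H) (y w z : H),
      (LinearMap.rTensor H (LinearMap.mul' k A))
        ((TensorProduct.assoc k A A H).symm (a ⊗ₜ
          (LinearMap.rTensor H (LinearMap.mul' k A))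
          ((TensorProduct.map
            (TensorProduct.map (TensorProduct.lift σ) (TensorProduct.lift f))
            (LinearMap.mul' k H))
            ((LinearMap.rTensor (H ⊗[k] H)
              (TensorProduct.tensorTensorTensorComm k H H A H).toLinearMap)
              ((u ⊗ₜ (b ⊗ₜ w)) ⊗ₜ (y ⊗ₜ z)))))) =
      ((LinearMap.mulLeft k a) ((LinearMap.mul' k A)
      ((TensorProduct.map (σ.flip b) (TensorProduct.lift f))
      ((TensorProduct.assoc k H H H) (u ⊗ₜ w))))) ⊗ₜ (y * z) := by
    intro u y w z
    induction u with
    | zero => simp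
    | tmul p q => simp
    | add p q hp hq =>
      simp only [TensorProduct.add_tmul, TensorProduct.tmul_add, map_add, hp, hq]
  simp only [crossedMul, phiE, TensorProduct.lift.tmul, LinearMap.compl₂_apply,
    LinearMap.comp_apply, TensorProduct.curry_apply, LinearMap.llcomp_apply,
    TensorProduct.map_tmul, LinearMap.lTensor_tmul, LinearEquiv.coe_coe, hrep h, hrep l,
    map_sum, TensorProduct.tmul_sum, TensorProduct.sum_tmul, LinearMap.rTensor_tmul,
    TensorProduct.assoc_symm_tmul, TensorProduct.tensorTensorTensorComm_tmul]
  simp only [← LinearEquiv.coe_coe, ← LinearMap.rTensor_tmul]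
  first
    | (refine Finset.sum_congr rfl fun i _ => Finset.sum_congr rfl fun j _ => ?_
       exact e _ _ _ _)
    | (rw [Finset.sum_comm]
       refine Finset.sum_congr rfl fun i _ => Finset.sum_congr rfl fun j _ => ?_
       exact e _ _ _ _)

end Helpers

section Statement5

variable (k A H : Type*) [CommRing k] [Ring A] [Algebra k A] [Ring H] [HopfAlgebra k H]

/-- For a crossed product `E = A #_f H`, the map `ν = id_A ⊗ Δ : E → E ⊗ H`
is a homomorphism of unital `k`-algebras, coassociative and counital; i.e. it makes `E` a
right `H`-comodule algebra. -/
theorem nu_comodule_algebra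
    (σ : H →ₗ[k] A →ₗ[k] A) (f : H →ₗ[k] H →ₗ[k] A)
    (n : H → ℕ) (c₁ c₂ : H → ℕ → H)
    (hrep : IsSweedlerRep k H n c₁ c₂)
    (hweak : IsWeakAction k A H n c₁ c₂ σ)
    (hnormal : IsNormal k A H f)
    (hcocycle : IsCocycle k A H n c₁ c₂ σ f)
    (htwisted : IsTwistedModule k A H n c₁ c₂ σ f) :
    (∀ x y : A ⊗[k] H,
        nuE k A H (crossedMul k A H σ f x y) =
          mulEH k A H σ f (nuE k A H x) (nuE k A H y)) ∧
    (nuE k A H (oneE k A H) = oneE k A H ⊗ₜ[k] (1 : H)) ∧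
    ((LinearMap.rTensor H (nuE k A H)) ∘ₗ (nuE k A H) =
      (TensorProduct.assoc k (A ⊗[k] H) H H).symm.toLinearMap ∘ₗ
        (LinearMap.lTensor (A ⊗[k] H) (Coalgebra.comul (R := k))) ∘ₗ (nuE k A H)) ∧
    ((TensorProduct.rid k (A ⊗[k] H)).toLinearMap ∘ₗ
        (LinearMap.lTensor (A ⊗[k] H) (Coalgebra.counit (R := k))) ∘ₗ (nuE k A H) =
      LinearMap.id) := by
  refine ⟨?_, ?_, ?_, ?_⟩
  · intro x y
    induction x with
    | zero => simp
    | add p q hp hq => simp only [map_add, LinearMap.add_apply, hp, hq]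
    | tmul a h =>
    induction y with
    | zero => simp
    | add p q hp hq => simp only [map_add, hp, hq]
    | tmul b l =>
    have hL : nuE k A H (crossedMul k A H σ f (a ⊗ₜ h) (b ⊗ₜ l)) =
        bigQ k A H (phiE k A H σ f a b)
          (LinearMap.lTensor H (Coalgebra.comul (R := k)) (Coalgebra.comul (R := k) h))
          (LinearMap.lTensor H (Coalgebra.comul (R := k)) (Coalgebra.comul (R := k) l)) := by
      rw [crossedMul_tmul k A H σ f n c₁ c₂ hrep, hrep h, hrep l]
      simp only [map_sum, LinearMap.sum_apply, LinearMap.lTensor_tmul, bigQ_tmul, nuE,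
        LinearMap.comp_apply, Bialgebra.comul_mul, LinearEquiv.coe_coe]
      try rw [Finset.sum_comm]
    have hq : ∀ (u u' : H ⊗[k] H) (w w' : H),
        bigQ k A H (phiE k A H σ f a b) (TensorProduct.assoc k H H H (u ⊗ₜ w))
          (TensorProduct.assoc k H H H (u' ⊗ₜ w')) =
        (TensorProduct.map (TensorProduct.lift (phiE k A H σ f a b)) (LinearMap.mul' k H)
          (TensorProduct.tensorTensorTensorComm k H H H H (u ⊗ₜ u'))) ⊗ₜ[k] (w * w') := by
      intro u u' w w'
      induction u with
      | zero => simp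
      | add p q hp hq => simp only [map_add, LinearMap.add_apply, TensorProduct.add_tmul, hp, hq]
      | tmul p q =>
      induction u' with
      | zero => simp
      | add p q hp hq => simp only [map_add, TensorProduct.tmul_add, TensorProduct.add_tmul, hp, hq]
      | tmul p' q' => simp [bigQ_tmul]
    have hc : ∀ h l : H, crossedMul k A H σ f (a ⊗ₜ h) (b ⊗ₜ l) =
        (TensorProduct.map (TensorProduct.lift (phiE k A H σ f a b)) (LinearMap.mul' k H)
          (TensorProduct.tensorTensorTensorComm k H H H H
            (Coalgebra.comul (R := k) h ⊗ₜ Coalgebra.comul (R := k) l))) := by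
      intro h l
      rw [crossedMul_tmul k A H σ f n c₁ c₂ hrep, hrep h, hrep l]
      simp only [TensorProduct.sum_tmul, TensorProduct.tmul_sum, map_sum,
        TensorProduct.tensorTensorTensorComm_tmul, TensorProduct.map_tmul,
        TensorProduct.lift.tmul, LinearMap.mul'_apply]
      try rw [Finset.sum_comm]
    rw [hL, ← Coalgebra.coassoc_apply, ← Coalgebra.coassoc_apply]
    have hn : ∀ (a : A) (h : H), nuE k A H (a ⊗ₜ h) =
        ∑ i ∈ Finset.range (n h), (a ⊗ₜ[k] c₁ h i) ⊗ₜ[k] c₂ h i := by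
      intro a h
      simp [nuE, hrep h, TensorProduct.tmul_sum]
    rw [hn, hn, hrep h, hrep l]
    simp only [map_sum, LinearMap.sum_apply, LinearMap.rTensor_tmul, hq, ← hc]
    simp [mulEH]
  · simp [nuE, oneE, Algebra.TensorProduct.one_def]
  · ext a h
    have key : ∀ t : H ⊗[k] H, (LinearMap.rTensor H (nuE k A H))
        ((TensorProduct.assoc k A H H).symm (a ⊗ₜ t)) =
        (TensorProduct.assoc k (A ⊗[k] H) H H).symm ((TensorProduct.assoc k A H (H ⊗[k] H)).symm
          (a ⊗ₜ (TensorProduct.assoc k H H H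
            (LinearMap.rTensor H (Coalgebra.comul (R := k)) t)))) := by
      intro t
      induction t with
      | zero => simp
      | add p q hp hq => simp only [map_add, TensorProduct.tmul_add, hp, hq]
      | tmul p q =>
        simp [nuE]
        generalize (Coalgebra.comul (R := k) p) = s
        induction s with
        | zero => simp
        | add p q hp hq => simp only [map_add, TensorProduct.tmul_add, TensorProduct.add_tmul, hp, hq]
        | tmul p q => simp
    have key2 : ∀ t : H ⊗[k] H, (LinearMap.lTensor (A ⊗[k] H) (Coalgebra.comul (R := k)))
        ((TensorProduct.assoc k A H H).symm (a ⊗ₜ t)) =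
        (TensorProduct.assoc k A H (H ⊗[k] H)).symm
          (a ⊗ₜ (LinearMap.lTensor H (Coalgebra.comul (R := k)) t)) := by
      intro t
      induction t with
      | zero => simp
      | add p q hp hq => simp only [map_add, TensorProduct.tmul_add, hp, hq]
      | tmul p q => simp
    have h1 := key (Coalgebra.comul (R := k) h)
    have h2 := key2 (Coalgebra.comul (R := k) h)
    rw [Coalgebra.coassoc_apply, ← h2] at h1
    simpa [nuE] using h1
  · ext a h
    have key : ∀ t : H ⊗[k] H, (TensorProduct.rid k (A ⊗[k] H))
        ((LinearMap.lTensor (A ⊗[k] H) (Coalgebra.counit (R := k)))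
        ((TensorProduct.assoc k A H H).symm (a ⊗ₜ t))) =
        a ⊗ₜ (TensorProduct.rid k H (LinearMap.lTensor H (Coalgebra.counit (R := k)) t)) := by
      intro t
      induction t with
      | zero => simp
      | add p q hp hq => simp only [map_add, TensorProduct.tmul_add, hp, hq]
      | tmul p q => simp
    have h1 := key (Coalgebra.comul (R := k) h)
    rw [Coalgebra.lTensor_counit_comul] at h1
    simpa [nuE] using h1
end Statement5
end

section
/- Assume conditions (i)–(iii) hold and f is convolution invertible with inverse f^{-1}. Then for every h ∈ H one has ν(γ^{-1}(h)) = γ^{-1}(h^{(2)}) ⊗ S(h^{(1)}) in E ⊗_k H, where ν = id_A ⊗ Δ : E → E ⊗_k H is the canonical coaction on E = A #_f H. -/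
open TensorProduct

open Coalgebra HopfAlgebra WithConv in
/-- The antipode is an anti-homomorphism of coalgebras. -/
theorem comul_antipode_aux (k H : Type*) [CommRing k] [Ring H] [HopfAlgebra k H] :
    (comul (R := k) (A := H)) ∘ₗ antipode k =
      (TensorProduct.comm k H H).toLinearMap ∘ₗ
        TensorProduct.map (antipode k) (antipode k) ∘ₗ comul := by
  have hS : ∀ {B : Type _} [Ring B] [Algebra k B] (φ : H →ₐ[k] B),
      toConv (φ.toLinearMap ∘ₗ antipode k) * toConv φ.toLinearMap = 1 ∧
      toConv φ.toLinearMap * toConv (φ.toLinearMap ∘ₗ antipode k) = 1 := by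
    intro B _ _ φ
    constructor
    · ext h
      rw [(ℛ k h).convMul_apply]
      simp [← map_mul, ← map_sum, sum_antipode_mul_eq_algebraMap_counit]
    · ext h
      rw [(ℛ k h).convMul_apply]
      simp [← map_mul, ← map_sum, sum_mul_antipode_eq_algebraMap_counit]
  let i1 : H →ₐ[k] H ⊗[k] H := Algebra.TensorProduct.includeLeft
  let i2 : H →ₐ[k] H ⊗[k] H := Algebra.TensorProduct.includeRight
  have e1 : toConv (comul (R := k) (A := H)) =
      toConv i1.toLinearMap * toConv i2.toLinearMap := by
    ext h
    rw [(ℛ k h).convMul_apply]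
    simp [i1, i2, (ℛ k h).eq]
  have e2 : toConv ((TensorProduct.comm k H H).toLinearMap ∘ₗ
        TensorProduct.map (antipode k) (antipode k) ∘ₗ comul) =
      toConv (i2.toLinearMap ∘ₗ antipode k) * toConv (i1.toLinearMap ∘ₗ antipode k) := by
    ext h
    rw [(ℛ k h).convMul_apply]
    simp [i1, i2, ← (ℛ k h).eq]
  apply WithConv.toConv_injective
  apply left_inv_eq_right_inv (a := toConv (comul (R := k) (A := H)))
  · exact (hS (Bialgebra.comulAlgHom k H)).1
  · rw [e1, e2, mul_assoc, ← mul_assoc (toConv i2.toLinearMap), (hS i2).2, one_mul, (hS i1).2]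

/-- If `E = A #_f H` is a crossed product with convolution invertible
cocycle, then `ν(γ⁻¹(h)) = γ⁻¹(h⁽²⁾) ⊗ S(h⁽¹⁾)` for all `h ∈ H`. -/
theorem nu_gammaInv
    (k A H : Type*) [CommRing k] [Ring A] [Algebra k A] [Ring H] [HopfAlgebra k H]
    (σ : H →ₗ[k] A →ₗ[k] A) (f finv : H →ₗ[k] H →ₗ[k] A)
    (n : H → ℕ) (c₁ c₂ : H → ℕ → H)
    (hrep : IsSweedlerRep k H n c₁ c₂)
    (hweak : IsWeakAction k A H n c₁ c₂ σ)
    (hnormal : IsNormal k A H f)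
    (hcocycle : IsCocycle k A H n c₁ c₂ σ f)
    (htwisted : IsTwistedModule k A H n c₁ c₂ σ f)
    (hinv : IsConvInverse k A H n c₁ c₂ f finv) :
    ∀ h : H,
      nuE k A H (gammaInv k A H finv h) =
        ∑ i ∈ Finset.range (n h),
          gammaInv k A H finv (c₂ h i) ⊗ₜ[k] HopfAlgebra.antipode (R := k) (c₁ h i) := by
  intro h
  set S : H →ₗ[k] H := HopfAlgebra.antipode (R := k) with hS
  let g : H →ₗ[k] A := (TensorProduct.lift finv) ∘ₗ (LinearMap.rTensor H S) ∘ₗ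
    (Coalgebra.comul (R := k))
  have hg : gammaInv k A H finv = (TensorProduct.comm k H A).toLinearMap ∘ₗ
      TensorProduct.map S g ∘ₗ Coalgebra.comul (R := k) := by
    rw [gammaInv, ← hS]
    simp only [← LinearMap.comp_assoc, g]
    congr 1
    simp only [LinearMap.comp_assoc, LinearMap.map_comp_lTensor]
  have hr : ∑ i ∈ Finset.range (n h), gammaInv k A H finv (c₂ h i) ⊗ₜ[k] S (c₁ h i) =
      (TensorProduct.comm k H (A ⊗[k] H))
        (TensorProduct.map S ((TensorProduct.comm k H A).toLinearMap ∘ₗ TensorProduct.map S g)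
          (LinearMap.lTensor H (Coalgebra.comul (R := k)) (Coalgebra.comul (R := k) h))) := by
    rw [hrep h, hg]
    simp
  have hcomm : ∀ x : H ⊗[k] H, nuE k A H ((TensorProduct.comm k H A) (TensorProduct.map S g x)) =
      (TensorProduct.assoc k A H H).symm ((TensorProduct.comm k (H ⊗[k] H) A)
        (TensorProduct.map ((TensorProduct.comm k H H).toLinearMap ∘ₗ TensorProduct.map S S) g
          (LinearMap.rTensor H (Coalgebra.comul (R := k)) x))) := by
    intro x
    induction x with
    | zero => simp
    | add x y hx hy => simp only [map_add, hx, hy]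
    | tmul x y =>
      have := LinearMap.congr_fun (comul_antipode_aux k H) x
      simp only [LinearMap.comp_apply, LinearEquiv.coe_coe] at this
      simp [nuE, hS, this]
  rw [hr, hg, ← Coalgebra.coassoc_apply]
  simp only [LinearMap.comp_apply, LinearEquiv.coe_coe]
  rw [hcomm]
  generalize LinearMap.rTensor H (Coalgebra.comul (R := k)) (Coalgebra.comul (R := k) h) = y
  induction y with
  | zero => simp
  | add x y hx hy => simp only [map_add, hx, hy]
  | tmul x z =>
    induction x with
    | zero => simp
    | add x y hx hy => simp only [map_add, TensorProduct.add_tmul, hx, hy]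
    | tmul x y => simp
end
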